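/- arXiv:math/0103060 — 3 statements merged into one kernel-verified Lean document; each statement's English description precedes it below -/
import Mathlib

section
/- Suppose a, b ∈ F^× satisfy b + b^{−1} = q(i) for some i ∈ I. If a^{−2}(ab−1)²(ab^{−1}−1)² · ( a^{−2}(ab−1)²(ab^{−1}−1)² − ξ²a^{−1}b^{−1}(ab−1)² − ξ²a^{−1}b(ab^{−1}−1)² ) = 0, then a + a^{−1} = q(j) for some j ∈ I with |i − j| ≤ 1. -/
set_option maxHeartbeats 1000000

namespace HC

/-- Generators of the affine Hecke–Clifford superalgebra `H_n`. -/
inductive Gen (n : ℕ) : Type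
  | X : Fin n → Gen n
  | Xinv : Fin n → Gen n
  | C : Fin n → Gen n
  | T : Fin (n - 1) → Gen n

/-- The node `i` of `Fin n`, for `i : Fin (n-1)` (1-based: the node `i`). -/
def lo {n : ℕ} (i : Fin (n - 1)) : Fin n :=
  ⟨i.val, by have := i.isLt; omega⟩

/-- The node `i+1` of `Fin n`, for `i : Fin (n-1)`. -/
def hi {n : ℕ} (i : Fin (n - 1)) : Fin n :=
  ⟨i.val + 1, by have := i.isLt; omega⟩

variable (F : Type) [Field F]

/-- The free algebra on the generators. -/
abbrev FA (n : ℕ) : Type := FreeAlgebra F (Gen n)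

noncomputable def fx {n : ℕ} (i : Fin n) : FA F n := FreeAlgebra.ι F (Gen.X i)
noncomputable def fxinv {n : ℕ} (i : Fin n) : FA F n := FreeAlgebra.ι F (Gen.Xinv i)
noncomputable def fc {n : ℕ} (i : Fin n) : FA F n := FreeAlgebra.ι F (Gen.C i)
noncomputable def ft {n : ℕ} (i : Fin (n - 1)) : FA F n := FreeAlgebra.ι F (Gen.T i)

/-- The defining relations of the affine Hecke–Clifford superalgebra, with parameter
`q` and `ξ = q - q⁻¹`. -/
inductive Rel (q : F) (n : ℕ) : FA F n → FA F n → Prop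
  | XXinv (i : Fin n) : Rel q n (fx F i * fxinv F i) 1
  | XinvX (i : Fin n) : Rel q n (fxinv F i * fx F i) 1
  | XX (i j : Fin n) : Rel q n (fx F i * fx F j) (fx F j * fx F i)
  | XiXi (i j : Fin n) : Rel q n (fxinv F i * fxinv F j) (fxinv F j * fxinv F i)
  | XXi (i j : Fin n) (h : i ≠ j) : Rel q n (fx F i * fxinv F j) (fxinv F j * fx F i)
  | CC (i : Fin n) : Rel q n (fc F i * fc F i) 1
  | Canti (i j : Fin n) (h : i ≠ j) : Rel q n (fc F i * fc F j) (-(fc F j * fc F i))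
  | CX (i : Fin n) : Rel q n (fc F i * fx F i) (fxinv F i * fc F i)
  | CXi (i : Fin n) : Rel q n (fc F i * fxinv F i) (fx F i * fc F i)
  | CXo (i j : Fin n) (h : i ≠ j) : Rel q n (fc F i * fx F j) (fx F j * fc F i)
  | CXio (i j : Fin n) (h : i ≠ j) : Rel q n (fc F i * fxinv F j) (fxinv F j * fc F i)
  | Tquad (i : Fin (n - 1)) : Rel q n (ft F i * ft F i) ((q - q⁻¹) • ft F i + 1)
  | Tbraid (i j : Fin (n - 1)) (h : (j : ℕ) = (i : ℕ) + 1) :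
      Rel q n (ft F i * ft F j * ft F i) (ft F j * ft F i * ft F j)
  | TTfar (i j : Fin (n - 1)) (h : (i : ℕ) + 1 < (j : ℕ)) :
      Rel q n (ft F i * ft F j) (ft F j * ft F i)
  | TC (i : Fin (n - 1)) : Rel q n (ft F i * fc F (lo i)) (fc F (hi i) * ft F i)
  | TCo (i : Fin (n - 1)) (j : Fin n) (h1 : j ≠ lo i) (h2 : j ≠ hi i) :
      Rel q n (ft F i * fc F j) (fc F j * ft F i)
  | TXo (i : Fin (n - 1)) (j : Fin n) (h1 : j ≠ lo i) (h2 : j ≠ hi i) :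
      Rel q n (ft F i * fx F j) (fx F j * ft F i)
  | TXio (i : Fin (n - 1)) (j : Fin n) (h1 : j ≠ lo i) (h2 : j ≠ hi i) :
      Rel q n (ft F i * fxinv F j) (fxinv F j * ft F i)
  | cross (i : Fin (n - 1)) :
      Rel q n ((ft F i + (q - q⁻¹) • (fc F (lo i) * fc F (hi i))) * fx F (lo i) * ft F i)
        (fx F (hi i))

/-- The affine Hecke–Clifford superalgebra `H_n` over `F` with parameter `q`. -/
abbrev H (q : F) (n : ℕ) : Type := RingQuot (Rel F q n)

noncomputable def X (q : F) {n : ℕ} (i : Fin n) : H F q n :=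
  RingQuot.mkAlgHom F (Rel F q n) (fx F i)

noncomputable def Xinv (q : F) {n : ℕ} (i : Fin n) : H F q n :=
  RingQuot.mkAlgHom F (Rel F q n) (fxinv F i)

noncomputable def C (q : F) {n : ℕ} (i : Fin n) : H F q n :=
  RingQuot.mkAlgHom F (Rel F q n) (fc F i)

noncomputable def T (q : F) {n : ℕ} (i : Fin (n - 1)) : H F q n :=
  RingQuot.mkAlgHom F (Rel F q n) (ft F i)

/-- `q` is either a primitive root of unity of odd order (including `q = 1`)
or not a root of unity at all (and `q ≠ 0`). -/
def GoodParam (q : F) : Prop :=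
  q ≠ 0 ∧ ((∃ m : ℕ, Odd m ∧ IsPrimitiveRoot q m) ∨ ∀ m : ℕ, 0 < m → q ^ m ≠ 1)

/-- `X_i^a` for an integer exponent `a ∈ ℤ`. -/
noncomputable def XZ (q : F) {n : ℕ} (i : Fin n) (a : ℤ) : H F q n :=
  if 0 ≤ a then X F q i ^ a.toNat else Xinv F q i ^ (-a).toNat

/-- The monomial `X^α = X_1^{α_1} ⋯ X_n^{α_n}` for `α ∈ ℤ^n`. -/
noncomputable def Xmon (q : F) {n : ℕ} (α : Fin n → ℤ) : H F q n :=
  ((List.finRange n).map fun i => XZ F q i (α i)).prod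

/-- The monomial `C^β = C_1^{β_1} ⋯ C_n^{β_n}` for `β ∈ {0,1}^n`. -/
noncomputable def Cmon (q : F) {n : ℕ} (β : Fin n → Bool) : H F q n :=
  ((List.finRange n).map fun i => if β i then C F q i else 1).prod

/-- The basic transposition `s_i = (i, i+1)` of `S_n`. -/
def s {n : ℕ} (i : Fin (n - 1)) : Equiv.Perm (Fin n) := Equiv.swap (lo i) (hi i)

/-- The Coxeter length (number of inversions) of a permutation of `Fin n`. -/
def len {n : ℕ} (w : Equiv.Perm (Fin n)) : ℕ :=
  ((Finset.univ : Finset (Fin n × Fin n)).filter fun p => p.1 < p.2 ∧ w p.2 < w p.1).card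

/-- `Tw` is the family of standard basis elements `T_w`, `w ∈ S_n`: it satisfies
`T_1 = 1`, `T_{s_i} = T_i`, and `T_{s_i w} = T_i T_w` whenever `ℓ(s_i w) = ℓ(w) + 1`.
These conditions determine the family uniquely. -/
def IsTFam (q : F) {n : ℕ} (Tw : Equiv.Perm (Fin n) → H F q n) : Prop :=
  Tw 1 = 1 ∧ (∀ i : Fin (n - 1), Tw (s i) = T F q i) ∧
    ∀ (i : Fin (n - 1)) (w : Equiv.Perm (Fin n)),
      len (s i * w) = len w + 1 → Tw (s i * w) = T F q i * Tw w

/-- `h` is the quantum characteristic of `q`:  the smallest positive integer with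
`q^{1-h} + q^{3-h} + ⋯ + q^{h-1} = 0`. -/
def qcharEq (q : F) (h : ℕ) : Prop :=
  0 < h ∧ (∑ k ∈ Finset.range h, q ^ (1 - (h : ℤ) + 2 * (k : ℤ))) = 0 ∧
    ∀ h' : ℕ, 0 < h' → h' < h →
      (∑ k ∈ Finset.range h', q ^ (1 - (h' : ℤ) + 2 * (k : ℤ))) ≠ 0

/-- `i ∈ I = {0, 1, …, ℓ}` where `ℓ = (h-1)/2` (no condition if the quantum
characteristic is infinite). -/
def memI (q : F) (i : ℕ) : Prop := ∀ h : ℕ, qcharEq F q h → 2 * i + 1 ≤ h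

/-- `q(i) = 2(q^{2i+1} + q^{-2i-1})/(q + q⁻¹)`. -/
noncomputable def qres (q : F) (i : ℕ) : F :=
  2 * (q ^ (2 * i + 1) + q⁻¹ ^ (2 * i + 1)) / (q + q⁻¹)

/-- Index of the block containing position `k` (0-based), for a composition given as a
list of parts. -/
def blk : List ℕ → ℕ → ℕ
  | [], _ => 0
  | a :: rest, k => if k < a then 0 else blk rest (k - a) + 1

/-- Membership in the Young subgroup `S_μ ⊆ S_n`. -/
def InYoung {n : ℕ} (μ : List ℕ) (w : Equiv.Perm (Fin n)) : Prop :=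
  ∀ k : Fin n, blk μ (w k).val = blk μ k.val

/-- `μ` is a composition of `n`. -/
def IsComposition (μ : List ℕ) (n : ℕ) : Prop := (∀ a ∈ μ, 0 < a) ∧ μ.sum = n

/-- The parabolic subalgebra generated by all `X_i^{±1}`, `C_i`, and the `T_j` with
`j` in a set `J` of admissible indices. -/
def parabolicJ (q : F) {n : ℕ} (J : Set (Fin (n - 1))) : Subalgebra F (H F q n) :=
  Algebra.adjoin F
    ((Set.range fun i : Fin n => X F q i) ∪ (Set.range fun i : Fin n => Xinv F q i) ∪
      (Set.range fun i : Fin n => C F q i) ∪ {h | ∃ j ∈ J, h = T F q j})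

/-- The parabolic subalgebra `H_μ` for a composition `μ`. -/
def parabolicC (q : F) {n : ℕ} (μ : List ℕ) : Subalgebra F (H F q n) :=
  parabolicJ F q {j | InYoung μ (s j)}

/-- The classical parabolic subalgebra `H^cl_μ`, generated by the `T_j` with `s_j ∈ S_μ`. -/
def clparC (q : F) {n : ℕ} (μ : List ℕ) : Subalgebra F (H F q n) :=
  Algebra.adjoin F {h | ∃ j : Fin (n - 1), InYoung μ (s j) ∧ h = T F q j}

/-- The finite Hecke–Clifford subalgebra `H^fn_n`, generated by all `C_i` and `T_j`. -/
def Hfin (q : F) (n : ℕ) : Subalgebra F (H F q n) :=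
  Algebra.adjoin F
    ((Set.range fun i : Fin n => C F q i) ∪ {h | ∃ j : Fin (n - 1), h = T F q j})

/-- `x` is a minimal length `(S_μ, S_ν)`-double coset representative. -/
def IsMinDC {n : ℕ} (μ ν : List ℕ) (x : Equiv.Perm (Fin n)) : Prop :=
  ∀ u v : Equiv.Perm (Fin n), InYoung μ u → InYoung ν v → len x ≤ len (u * x * v)

/-- `w ∈ S_μ x S_ν`. -/
def InDC {n : ℕ} (μ ν : List ℕ) (x w : Equiv.Perm (Fin n)) : Prop :=
  ∃ u v : Equiv.Perm (Fin n), InYoung μ u ∧ InYoung ν v ∧ w = u * x * v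

/-- A covering step in the Bruhat order: multiplication by a reflection increasing length. -/
def BruhatStep {n : ℕ} (v w : Equiv.Perm (Fin n)) : Prop :=
  ∃ a b : Fin n, a ≠ b ∧ w = Equiv.swap a b * v ∧ len v < len w

/-- The Bruhat order on `S_n`. -/
def BruhatLE {n : ℕ} : Equiv.Perm (Fin n) → Equiv.Perm (Fin n) → Prop :=
  Relation.ReflTransGen BruhatStep

/-- The space of `A`-equivariant linear maps between two representations of the
`F`-algebra `A`. -/
def eqvHoms {A : Type} [Ring A] [Algebra F A] {M N : Type}
    [AddCommGroup M] [Module F M] [AddCommGroup N] [Module F N]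
    (ρM : A →ₐ[F] Module.End F M) (ρN : A →ₐ[F] Module.End F N) :
    Submodule F (M →ₗ[F] N) where
  carrier := {f | ∀ (x : A) (m : M), f (ρM x m) = ρN x (f m)}
  add_mem' := by
    intro f g hf hg x m
    simp only [LinearMap.add_apply, hf x m, hg x m, map_add]
  zero_mem' := by
    intro x m
    simp only [LinearMap.zero_apply, map_zero]
  smul_mem' := by
    intro c f hf x m
    simp only [LinearMap.smul_apply, hf x m, map_smul]

/-- `(E, ρE, ι)` is the module induced along the algebra morphism `φ : B →ₐ A` from
the `B`-representation `(M, ρ)`, i.e. `E = A ⊗_B M`, characterized by its universal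
property. -/
def IsInducedAlong {A B : Type} [Ring A] [Ring B] [Algebra F A] [Algebra F B]
    (φ : B →ₐ[F] A) {M : Type} [AddCommGroup M] [Module F M]
    (ρ : B →ₐ[F] Module.End F M) {E : Type} [AddCommGroup E] [Module F E]
    (ρE : A →ₐ[F] Module.End F E) (ι : M →ₗ[F] E) : Prop :=
  (∀ (b : B) (m : M), ι (ρ b m) = ρE (φ b) (ι m)) ∧
    ∀ (P : Type) [AddCommGroup P] [Module F P],
      ∀ (ρP : A →ₐ[F] Module.End F P) (f : M →ₗ[F] P),
        (∀ (b : B) (m : M), f (ρ b m) = ρP (φ b) (f m)) →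
        ∃! g : E →ₗ[F] P,
          (∀ (x : A) (e : E), g (ρE x e) = ρP x (g e)) ∧ ∀ m : M, g (ι m) = f m

/-- `δ` is the grading automorphism of the superalgebra `H_n`
(identity on even generators, `-1` on the odd generators `C_i`). -/
def IsGradingAut (q : F) {n : ℕ} (δ : H F q n →ₐ[F] H F q n) : Prop :=
  (∀ i : Fin n, δ (X F q i) = X F q i) ∧ (∀ i : Fin n, δ (Xinv F q i) = Xinv F q i) ∧
    (∀ i : Fin n, δ (C F q i) = -C F q i) ∧ ∀ i : Fin (n - 1), δ (T F q i) = T F q i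

/-- `τ` is the antiautomorphism of `H_n` with `τ(T_i) = T_i + ξ C_i C_{i+1}`,
`τ(C_j) = C_j`, `τ(X_j) = X_j`. -/
def IsTauAntiAut (q : F) {n : ℕ} (τ : H F q n →ₗ[F] H F q n) : Prop :=
  Function.Bijective τ ∧ (∀ a b : H F q n, τ (a * b) = τ b * τ a) ∧ τ 1 = 1 ∧
    (∀ i : Fin (n - 1),
      τ (T F q i) = T F q i + (q - q⁻¹) • (C F q (lo i) * C F q (hi i))) ∧
    (∀ j : Fin n, τ (C F q j) = C F q j) ∧ (∀ j : Fin n, τ (X F q j) = X F q j) ∧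
    ∀ j : Fin n, τ (Xinv F q j) = Xinv F q j

/-- `ρ'` is the representation of the subalgebra `B` obtained from the
`H_ν`-representation `ρν` by twisting with the isomorphism `φ_{x⁻¹}`
(determined by `X_i ↦ X_{x⁻¹ i}`, `C_i ↦ C_{x⁻¹ i}`, `T_w ↦ T_{x⁻¹ w x}`). -/
def IsTwistedRep (q : F) {n : ℕ} (ν : List ℕ) (x : Equiv.Perm (Fin n))
    (B : Subalgebra F (H F q n)) {M : Type} [AddCommGroup M] [Module F M]
    (ρν : ↥(parabolicC F q (n := n) ν) →ₐ[F] Module.End F M)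
    (ρ' : ↥B →ₐ[F] Module.End F M) : Prop :=
  (∀ (i : Fin n) (a : ↥B) (b : ↥(parabolicC F q (n := n) ν)),
      (a : H F q n) = X F q i → (b : H F q n) = X F q (x⁻¹ i) → ρ' a = ρν b) ∧
  (∀ (i : Fin n) (a : ↥B) (b : ↥(parabolicC F q (n := n) ν)),
      (a : H F q n) = Xinv F q i → (b : H F q n) = Xinv F q (x⁻¹ i) → ρ' a = ρν b) ∧
  (∀ (i : Fin n) (a : ↥B) (b : ↥(parabolicC F q (n := n) ν)),
      (a : H F q n) = C F q i → (b : H F q n) = C F q (x⁻¹ i) → ρ' a = ρν b) ∧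
  ∀ (j j' : Fin (n - 1)) (a : ↥B) (b : ↥(parabolicC F q (n := n) ν)),
      lo j' = x⁻¹ (lo j) → (a : H F q n) = T F q j → (b : H F q n) = T F q j' → ρ' a = ρν b

/-- The element `f = a_d X_1^d + ⋯ + a_1 X_1 + a_0` of `H_n`. -/
noncomputable def felem (q : F) (n d : ℕ) (aa : ℕ → F) : H F q n :=
  if h : 0 < n then ∑ i ∈ Finset.range (d + 1), aa i • X F q (⟨0, h⟩ : Fin n) ^ i else 0

/-- The conditions on the coefficients of `f`: degree `d ≥ 1`, monic, and
`a_i = a_0 a_{d-i}`. -/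
def GoodPoly (d : ℕ) (aa : ℕ → F) : Prop :=
  1 ≤ d ∧ aa d = 1 ∧ (∀ i ≤ d, aa i = aa 0 * aa (d - i)) ∧ ∀ i : ℕ, d < i → aa i = 0

/-- The relation generating the two-sided ideal `I_f` of `H_n`. -/
inductive CycRel (q : F) (n d : ℕ) (aa : ℕ → F) : H F q n → H F q n → Prop
  | rel : CycRel q n d aa (felem F q n d aa) 0

/-- The cyclotomic Hecke–Clifford superalgebra `H_n^f = H_n / I_f`. -/
abbrev Hf (q : F) (n d : ℕ) (aa : ℕ → F) : Type := RingQuot (CycRel F q n d aa)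

/-- The canonical quotient map `H_n → H_n^f`. -/
noncomputable def cyc (q : F) (n d : ℕ) (aa : ℕ → F) : H F q n →ₐ[F] Hf F q n d aa :=
  RingQuot.mkAlgHom F (CycRel F q n d aa)

noncomputable def Xf (q : F) (n d : ℕ) (aa : ℕ → F) (i : Fin n) : Hf F q n d aa :=
  cyc F q n d aa (X F q i)
noncomputable def Xinvf (q : F) (n d : ℕ) (aa : ℕ → F) (i : Fin n) : Hf F q n d aa :=
  cyc F q n d aa (Xinv F q i)
noncomputable def Cf (q : F) (n d : ℕ) (aa : ℕ → F) (i : Fin n) : Hf F q n d aa :=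
  cyc F q n d aa (C F q i)
noncomputable def Tf (q : F) (n d : ℕ) (aa : ℕ → F) (i : Fin (n - 1)) : Hf F q n d aa :=
  cyc F q n d aa (T F q i)

/-- `e` is the canonical embedding `H_k^f → H_N^f` (shifting all indices by `sh`;
for `sh = 0` this is the standard identification of `H_k^f` with a subalgebra of
`H_N^f`). -/
def IsCycEmb (q : F) (k N d : ℕ) (aa : ℕ → F) (sh : ℕ)
    (e : Hf F q k d aa →ₐ[F] Hf F q N d aa) : Prop :=
  (∀ (i : Fin k) (i' : Fin N), (i' : ℕ) = sh + (i : ℕ) →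
      e (Xf F q k d aa i) = Xf F q N d aa i') ∧
  (∀ (i : Fin k) (i' : Fin N), (i' : ℕ) = sh + (i : ℕ) →
      e (Xinvf F q k d aa i) = Xinvf F q N d aa i') ∧
  (∀ (i : Fin k) (i' : Fin N), (i' : ℕ) = sh + (i : ℕ) →
      e (Cf F q k d aa i) = Cf F q N d aa i') ∧
  ∀ (j : Fin (k - 1)) (j' : Fin (N - 1)), (j' : ℕ) = sh + (j : ℕ) →
      e (Tf F q k d aa j) = Tf F q N d aa j'

/-- `δ` is the grading automorphism of the superalgebra `H_n^f`. -/
def IsCycGrading (q : F) (n d : ℕ) (aa : ℕ → F)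
    (δ : Hf F q n d aa →ₐ[F] Hf F q n d aa) : Prop :=
  (∀ i : Fin n, δ (Xf F q n d aa i) = Xf F q n d aa i) ∧
  (∀ i : Fin n, δ (Xinvf F q n d aa i) = Xinvf F q n d aa i) ∧
  (∀ i : Fin n, δ (Cf F q n d aa i) = -Cf F q n d aa i) ∧
  ∀ j : Fin (n - 1), δ (Tf F q n d aa j) = Tf F q n d aa j

/-- The elements `f_1 = f`, `f_{i+1} = (T_i + ξ C_i C_{i+1}) f_i T_i` of `H_n`
(0-based indexing: `fseq k = f_{k+1}`). -/
noncomputable def fseq (q : F) (n d : ℕ) (aa : ℕ → F) : ℕ → H F q n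
  | 0 => felem F q n d aa
  | k + 1 =>
    if h : k < n - 1 then
      (T F q (⟨k, h⟩ : Fin (n - 1)) +
          (q - q⁻¹) • (C F q (lo (⟨k, h⟩ : Fin (n - 1))) *
            C F q (hi (⟨k, h⟩ : Fin (n - 1))))) *
        fseq q n d aa k * T F q (⟨k, h⟩ : Fin (n - 1))
    else 0

/-- `f_Z = f_{z_1} ⋯ f_{z_u}` for `Z = {z_1 < ⋯ < z_u} ⊆ {1,…,n}` (0-based). -/
noncomputable def fZ (q : F) (n d : ℕ) (aa : ℕ → F) (Z : Finset (Fin n)) : H F q n :=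
  ((Z.sort (· ≤ ·)).map fun z => fseq F q n d aa (z : ℕ)).prod

/-- `q^k + q^{-k}` does not vanish for a good parameter `q` and `k > 0`. -/
lemma GoodParam.zpow_add_zpow_neg_ne_zero {F : Type} [Field F] (h2 : (2 : F) ≠ 0) {q : F}
    (hq : GoodParam F q) {k : ℕ} (hk : 0 < k) : q ^ (k : ℤ) + q ^ (-(k : ℤ)) ≠ 0 := by
  obtain ⟨hq0, h⟩ := hq
  intro hsum
  have hsq : q ^ k * q ^ k = -1 := by
    have hne : q ^ k ≠ 0 := pow_ne_zero _ hq0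
    rw [zpow_neg, zpow_natCast] at hsum
    field_simp at hsum
    linear_combination hsum
  have hfour : q ^ (4 * k) = 1 := by
    rw [show 4 * k = k + k + (k + k) by ring, pow_add, pow_add, hsq]
    ring
  rcases h with ⟨m, hm, hprim⟩ | h
  · have hcop : Nat.Coprime m 4 := (Nat.Coprime.pow_right 2 hm.coprime_two_right :)
    have hdvd : m ∣ k := hcop.dvd_of_dvd_mul_left (hprim.dvd_of_pow_eq_one _ hfour)
    have hone : q ^ k = 1 := (hprim.pow_eq_one_iff_dvd k).mpr hdvd
    rw [hone] at hsq
    exact h2 (by linear_combination hsq)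
  · exact h _ (by omega) hfour

/-- The factorization `[2k] = [k] (q^k + q^{-k})` of quantum integers. -/
lemma quantumInt_two_mul {F : Type} [Field F] {q : F} (hq0 : q ≠ 0) (k : ℕ) :
    (∑ j ∈ Finset.range (k + k), q ^ (1 - ((k + k : ℕ) : ℤ) + 2 * (j : ℤ))) =
      (∑ j ∈ Finset.range k, q ^ (1 - (k : ℤ) + 2 * (j : ℤ))) *
        (q ^ (k : ℤ) + q ^ (-(k : ℤ))) := by
  rw [Finset.sum_range_add, mul_add, Finset.sum_mul, Finset.sum_mul, add_comm]
  congr 1 <;>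
  · refine Finset.sum_congr rfl fun j _ => ?_
    rw [← zpow_add₀ hq0]
    congr 1
    push_cast
    ring

/-- The quantum characteristic of a good parameter is not even. -/
lemma qcharEq.ne_add_self {F : Type} [Field F] (h2 : (2 : F) ≠ 0) {q : F}
    (hq : GoodParam F q) {h : ℕ} (hh : qcharEq F q h) (k : ℕ) : h ≠ k + k := by
  rintro rfl
  obtain ⟨hpos, hsum, hmin⟩ := hh
  have hk : 0 < k := by omega
  rw [quantumInt_two_mul hq.1] at hsum
  exact mul_ne_zero (hmin k hk (by omega)) (hq.zpow_add_zpow_neg_ne_zero h2 hk) hsum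

lemma qcharEq.pow_two_mul_eq_one {F : Type} [Field F] {q : F} (hq0 : q ≠ 0) {h : ℕ}
    (hh : qcharEq F q h) : q ^ (2 * h) = 1 := by
  have hsum := hh.2.1
  have hgeom : (∑ k ∈ Finset.range h, q ^ (1 - (h : ℤ) + 2 * (k : ℤ))) =
      q ^ (1 - (h : ℤ)) * ∑ k ∈ Finset.range h, (q ^ 2) ^ k := by
    rw [Finset.mul_sum]
    refine Finset.sum_congr rfl fun k _ => ?_
    rw [zpow_add₀ hq0, zpow_mul]
    norm_cast
  rw [hgeom] at hsum
  have hzero := (mul_eq_zero.mp hsum).resolve_left (zpow_ne_zero _ hq0)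
  have := geom_sum_mul (q ^ 2) h
  rw [hzero, zero_mul, ← pow_mul] at this
  exact (sub_eq_zero.mp this.symm)

lemma qcharEq.ne_one {F : Type} [Field F] {q : F} {h : ℕ} (hh : qcharEq F q h) : h ≠ 1 := by
  rintro rfl
  simpa using hh.2.1

lemma memI.mono {F : Type} [Field F] {q : F} {i j : ℕ} (hi : memI F q i) (hji : j ≤ i) :
    memI F q j := fun h hh => by
  have := hi h hh
  omega

/-- The values `q(i)` and `q(i+2)` agree at the upper end of the index set. -/
lemma qres_succ_succ_eq {F : Type} [Field F] {q : F} {i : ℕ}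
    (h : q ^ (2 * (2 * i + 3)) = 1) : qres F q (i + 2) = qres F q i := by
  unfold qres
  have h₁ : q ^ (2 * (i + 2) + 1) = q⁻¹ ^ (2 * i + 1) := by
    rw [inv_pow]
    refine eq_inv_of_mul_eq_one_left ?_
    rw [← pow_add, ← h]
    ring_nf
  have h₂ : q⁻¹ ^ (2 * (i + 2) + 1) = q ^ (2 * i + 1) := by
    rw [inv_pow, h₁, inv_pow, inv_inv]
  rw [h₁, h₂, add_comm]

lemma qres_recurrence {F : Type} [Field F] {q : F} (hq0 : q ≠ 0) (i : ℕ) :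
    qres F q i + qres F q (i + 2) = (2 + (q - q⁻¹) ^ 2) * qres F q (i + 1) := by
  have hinv : q⁻¹ * q = 1 := inv_mul_cancel₀ hq0
  unfold qres
  rw [← add_div, ← mul_div_assoc]
  congr 1
  generalize q⁻¹ = r at *
  rw [show 2 * (i + 2) + 1 = 2 * i + 1 + 4 by ring, show 2 * (i + 1) + 1 = 2 * i + 1 + 2 by ring]
  generalize 2 * i + 1 = n
  simp only [pow_add]
  linear_combination (4 * q ^ n * q ^ 2 + 4 * r ^ n * r ^ 2
    - 2 * (q * r + 1) * (q ^ n + r ^ n)) * hinv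

lemma qres_mul_qres {F : Type} [Field F] {q : F} (hq0 : q ≠ 0) (hq2 : q + q⁻¹ ≠ 0) (i : ℕ) :
    qres F q i * qres F q (i + 2) = qres F q (i + 1) ^ 2 + 4 * (q - q⁻¹) ^ 2 := by
  have hinv : q⁻¹ * q = 1 := inv_mul_cancel₀ hq0
  have hpow : q⁻¹ ^ (2 * i + 1) * q ^ (2 * i + 1) = 1 := by rw [← mul_pow, hinv, one_pow]
  unfold qres
  rw [show 2 * (i + 2) + 1 = 2 * i + 1 + 4 by ring, show 2 * (i + 1) + 1 = 2 * i + 1 + 2 by ring]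
  simp only [pow_add _ (2 * i + 1)]
  generalize q ^ (2 * i + 1) = Q at *
  generalize q⁻¹ ^ (2 * i + 1) = R at *
  generalize q⁻¹ = r at *
  field_simp
  have h₄ : r ^ 2 * q ^ 2 = 1 := by rw [← mul_pow, hinv, one_pow]
  linear_combination 4 * (q ^ 4 + r ^ 4) * hpow - 8 * hpow + 8 * (1 - R * Q) * h₄

lemma qres_zero {F : Type} [Field F] {q : F} (hq2 : q + q⁻¹ ≠ 0) : qres F q 0 = 2 := by
  simp [qres, hq2]

lemma qres_one {F : Type} [Field F] {q : F} (hq0 : q ≠ 0) (hq2 : q + q⁻¹ ≠ 0) :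
    qres F q 1 = 2 + 2 * (q - q⁻¹) ^ 2 := by
  have hinv : q⁻¹ * q = 1 := inv_mul_cancel₀ hq0
  unfold qres
  generalize q⁻¹ = r at *
  rw [div_eq_iff hq2]
  linear_combination 2 * (q + r) * hinv

/-- If `i ∈ I`, then `i + 1 ∈ I` unless `2i + 1` is the quantum characteristic. -/
lemma memI.succ_or_qcharEq {F : Type} [Field F] (h2 : (2 : F) ≠ 0) {q : F}
    (hq : GoodParam F q) {i : ℕ} (hi : memI F q i) :
    memI F q (i + 1) ∨ qcharEq F q (2 * i + 1) := by
  by_contra! hcon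
  obtain ⟨hsucc, hchar⟩ := hcon
  refine hsucc fun h hh => ?_
  have hle := hi h hh
  have hodd : h ≠ 2 * i + 1 := fun hEq => hchar (hEq ▸ hh)
  have heven := hh.ne_add_self h2 hq (i + 1)
  omega

/-- In terms of `x = a + a⁻¹` and `y = b + b⁻¹`, the vanishing condition says `x = y` or
`(x - y)² = ξ² (xy - 4)`. -/
lemma add_inv_eq_or_sq_sub_eq {F : Type} [Field F] {a b c : F} (ha : a ≠ 0) (hb : b ≠ 0)
    (heq : a⁻¹ ^ 2 * (a * b - 1) ^ 2 * (a * b⁻¹ - 1) ^ 2 *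
        (a⁻¹ ^ 2 * (a * b - 1) ^ 2 * (a * b⁻¹ - 1) ^ 2 -
          c * a⁻¹ * b⁻¹ * (a * b - 1) ^ 2 - c * a⁻¹ * b * (a * b⁻¹ - 1) ^ 2) = 0) :
    a + a⁻¹ = b + b⁻¹ ∨
      (a + a⁻¹ - (b + b⁻¹)) ^ 2 = c * ((a + a⁻¹) * (b + b⁻¹) - 4) := by
  have h₁ : a⁻¹ ^ 2 * (a * b - 1) ^ 2 * (a * b⁻¹ - 1) ^ 2 = (a + a⁻¹ - (b + b⁻¹)) ^ 2 := by
    field_simp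
    ring
  have h₂ : c * a⁻¹ * b⁻¹ * (a * b - 1) ^ 2 + c * a⁻¹ * b * (a * b⁻¹ - 1) ^ 2 =
      c * ((a + a⁻¹) * (b + b⁻¹) - 4) := by
    field_simp
    ring
  rw [sub_sub, h₂, h₁] at heq
  rcases mul_eq_zero.mp heq with h | h
  · exact Or.inl (sub_eq_zero.mp (pow_eq_zero_iff two_ne_zero |>.mp h))
  · exact Or.inr (sub_eq_zero.mp h)

/-- **Technical lemma on eigenvalues** (Lemma `nazelttech` of Brundan–Kleshchev):
if `b + b⁻¹ = q(i)` for some `i ∈ I` and the displayed polynomial expression in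
`a, b` vanishes, then `a + a⁻¹ = q(j)` for some `j ∈ I` with `|i - j| ≤ 1`. -/
theorem eigenvalue_neighbour_lemma
    (F : Type) [Field F] [IsAlgClosed F] (h2 : (2 : F) ≠ 0)
    (q : F) (hq : GoodParam F q)
    (i : ℕ) (hi : memI F q i) (a b : F) (ha : a ≠ 0) (hb : b ≠ 0)
    (hbq : b + b⁻¹ = qres F q i)
    (heq : a⁻¹ ^ 2 * (a * b - 1) ^ 2 * (a * b⁻¹ - 1) ^ 2 *
        (a⁻¹ ^ 2 * (a * b - 1) ^ 2 * (a * b⁻¹ - 1) ^ 2 -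
          (q - q⁻¹) ^ 2 * a⁻¹ * b⁻¹ * (a * b - 1) ^ 2 -
          (q - q⁻¹) ^ 2 * a⁻¹ * b * (a * b⁻¹ - 1) ^ 2) = 0) :
    ∃ j : ℕ, memI F q j ∧ |(i : ℤ) - (j : ℤ)| ≤ 1 ∧ a + a⁻¹ = qres F q j := by
  have hq0 := hq.1
  have hq2 : q + q⁻¹ ≠ 0 := by
    simpa using hq.zpow_add_zpow_neg_ne_zero h2 one_pos
  rcases add_inv_eq_or_sq_sub_eq ha hb heq with h | h
  · exact ⟨i, hi, by simp, h.trans hbq⟩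
  rw [hbq] at h
  generalize a + a⁻¹ = x at h ⊢
  rcases i with _ | k
  · rw [qres_zero hq2] at h
    have hfac : (x - qres F q 0) * (x - qres F q 1) = 0 := by
      rw [qres_zero hq2, qres_one hq0 hq2]
      linear_combination h
    rcases mul_eq_zero.mp hfac with h₀ | h₁
    · exact ⟨0, hi, by simp, sub_eq_zero.mp h₀⟩
    · refine ⟨1, ?_, by simp, sub_eq_zero.mp h₁⟩
      exact (hi.succ_or_qcharEq h2 hq).resolve_right fun hh => hh.ne_one rfl
  · have hfac : (x - qres F q k) * (x - qres F q (k + 2)) = 0 := by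
      linear_combination h - x * qres_recurrence hq0 k + qres_mul_qres hq0 hq2 k
    rcases mul_eq_zero.mp hfac with hlow | hhigh
    · exact ⟨k, hi.mono k.le_succ, by simp, sub_eq_zero.mp hlow⟩
    · rcases hi.succ_or_qcharEq h2 hq with hmem | hchar
      · exact ⟨k + 2, hmem, by push_cast; ring_nf; simp, sub_eq_zero.mp hhigh⟩
      · refine ⟨k, hi.mono k.le_succ, by simp, ?_⟩
        rw [sub_eq_zero.mp hhigh]
        exact qres_succ_succ_eq (hchar.pow_two_mul_eq_one hq0)

end HC
end

section
/- Let M be a finite-dimensional H_n-module and 1 ≤ j ≤ n. If every eigenvalue of the action of X_j + X_j^{−1} on M is of the form q(i) for some i ∈ I, then for every k = 1,…,n, every eigenvalue of X_k + X_k^{−1} on M is of the form q(i) for some i ∈ I. -/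
set_option maxHeartbeats 1000000

namespace HC

variable (F : Type) [Field F]

/-- The commutation relations and the quadratic identity behind the rank-two intertwiner, for elements
satisfying the relations of `X₁, X₁⁻¹, X₂, X₂⁻¹, C₁C₂, T₁`. -/
theorem rank_two_identities {F R : Type} [Field F] [Ring R] [Algebra F R] (z : F)
    (x u y v c t : R)
    (xu : x * u = 1) (ux : u * x = 1) (yv : y * v = 1) (vy : v * y = 1)
    (yx : y * x = x * y) (yu : y * u = u * y) (vx : v * x = x * v)
    (vu : v * u = u * v) (cc : c * c = -1)
    (xc : x * c = c * u) (uc : u * c = c * x) (yc : y * c = c * v) (vc : v * c = c * y)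
    (tc : t * c = -(c * t) + z • c + z • (1 : R))
    (tx : t * x = y * t - z • y - z • (c * x))
    (ty : t * y = x * t - z • (c * y) + z • y) :
    t * (x + u) = (y + v) * t + z • (u - y + c * (y - x)) ∧
    t * (y + v) = (x + u) * t - z • (u - y + c * (y - x)) ∧
    t * (u - y + c * (y - x)) =
      ((u - y + c * (y - x)) - (x + u) + (y + v)) * t + z • (u - y + c * (y - x)) ∧
    ((u - y + c * (y - x)) - (x + u) + (y + v)) * (u - y + c * (y - x)) =
      (x + u) * (y + v) - (4 : F) • (1 : R) ∧
    (x + u) * (u - y + c * (y - x)) = (u - y + c * (y - x)) * (x + u) ∧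
    (y + v) * (u - y + c * (y - x)) = (u - y + c * (y - x)) * (y + v) := by
  have tu : t * u = v * t + z • u + z • (c * y) := by
    have h : v * (t * x) * u = v * (y * t - z • y - z • (c * x)) * u := by rw [tx]
    have h1 : v * (t * x) * u = v * t := by
      rw [mul_assoc, mul_assoc, xu, mul_one]
    have h2 : v * (y * t - z • y - z • (c * x)) * u = t * u - z • u - z • (c * y) := by
      simp only [mul_sub, sub_mul, mul_smul_comm, smul_mul_assoc]
      rw [← mul_assoc v y, vy, one_mul, one_mul, ← mul_assoc v c, vc, mul_assoc, mul_assoc,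
        xu, mul_one]
    rw [h1, h2] at h
    rw [h]; abel
  have tv : t * v = u * t - z • u + z • (c * x) := by
    have h : u * (t * y) * v = u * (x * t - z • (c * y) + z • y) * v := by rw [ty]
    have h1 : u * (t * y) * v = u * t := by
      rw [mul_assoc, mul_assoc, yv, mul_one]
    have h2 : u * (x * t - z • (c * y) + z • y) * v = t * v - z • (c * x) + z • u := by
      simp only [mul_sub, sub_mul, mul_add, add_mul, mul_smul_comm, smul_mul_assoc]
      rw [← mul_assoc u x, ux, one_mul, ← mul_assoc u c, uc, mul_assoc (c * x), yv, mul_one,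
        mul_assoc u, yv, mul_one]
    rw [h1, h2] at h
    rw [h]; abel
  have assoc_rule : ∀ {a b d : R}, a * b = d → ∀ r, a * (b * r) = d * r := by
    intro a b d h r; rw [← mul_assoc, h]
  refine ⟨?_, ?_, ?_, ?_, ?_, ?_⟩ <;>
  · simp only [mul_add, add_mul, mul_sub, sub_mul, mul_assoc, neg_mul, mul_smul_comm,
      smul_mul_assoc, one_mul, mul_one, smul_add, smul_sub, smul_neg,
      xu, ux, yv, vy, yx, yu, vx, vu, cc, tx, ty, tu, tv, assoc_rule cc, assoc_rule xc,
      assoc_rule uc, assoc_rule yc, assoc_rule vc, assoc_rule tc]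
    module

/-- The relations between `X₁, X₂, C₁, C₂, T₁` put into straightening form. -/
theorem rank_two_straightening {F R : Type} [Field F] [Ring R] [Algebra F R] (z : F)
    (x y c d t : R) (hT : t * t = z • t + 1) (hC1 : c * c = 1) (hC2 : d * d = 1)
    (hC : d * c = -(c * d)) (hTC : t * c = d * t) (hX : (t + z • (c * d)) * x * t = y) :
    c * d * (c * d) = -1 ∧
    t * (c * d) = -(c * d * t) + z • (c * d) + z • (1 : R) ∧
    t * x = y * t - z • y - z • (c * d * x) ∧
    t * y = x * t - z • (c * d * y) + z • y := by
  have htt : t * (t - z • 1) = 1 := by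
    rw [mul_sub, hT, mul_smul_comm, mul_one]; abel
  have htt' : (t - z • 1) * t = 1 := by
    rw [sub_mul, hT, smul_mul_assoc, one_mul]; abel
  have hcc : c * d * (c * d) = -1 := by
    rw [mul_assoc, ← mul_assoc d c, hC, neg_mul, mul_assoc c d d, hC2, mul_one, mul_neg, hC1]
  have hTd : t * d = c * t - z • c + z • d := by
    have h : (t - z • 1) * (t * c) * (t - z • 1) = (t - z • 1) * (d * t) * (t - z • 1) := by
      rw [hTC]
    have h1 : (t - z • 1) * (t * c) * (t - z • 1) = c * (t - z • 1) := by
      rw [← mul_assoc, htt', one_mul]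
    have h2 : (t - z • 1) * (d * t) * (t - z • 1) = (t - z • 1) * d := by
      rw [mul_assoc, mul_assoc d, htt, mul_one]
    rw [h1, h2, mul_sub, sub_mul, mul_smul_comm, smul_mul_assoc, mul_one, one_mul] at h
    rw [h]; abel
  have htcd : t * (c * d) = -(c * d * t) + z • (c * d) + z • 1 := by
    rw [← mul_assoc, hTC, mul_assoc, hTd, mul_add, mul_sub, ← mul_assoc, hC, mul_smul_comm,
      mul_smul_comm, hC, hC2]
    simp
  refine ⟨hcc, htcd, ?_, ?_⟩
  · have h : (t + z • (c * d)) * x = y * (t - z • 1) := by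
      rw [← hX, mul_assoc _ t, htt, mul_one]
    rw [add_mul, mul_sub, smul_mul_assoc, mul_smul_comm, mul_one] at h
    rw [← h]; abel
  · have hu : (t + z • (c * d) - z • 1) * (t + z • (c * d)) = 1 := by
      simp only [add_mul, mul_add, sub_mul, hT, htcd, hcc, smul_mul_assoc, mul_smul_comm,
        one_mul]
      module
    have h : (t + z • (c * d) - z • 1) * y = x * t := by
      rw [← hX, mul_assoc _ x t, ← mul_assoc, hu, one_mul]
    rw [sub_mul, add_mul, smul_mul_assoc, smul_mul_assoc, one_mul] at h
    rw [← h]; abel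

/-- The rank-two identities in `H_n`, for `Y = X + X⁻¹` and a suitable element `A`. -/
theorem exists_intertwining_correction {F : Type} [Field F] (q : F) {n : ℕ} (i : Fin (n - 1)) :
    ∃ A : H F q n,
    let Y := fun k : Fin n => X F q k + Xinv F q k
    Y (lo i) * Y (hi i) = Y (hi i) * Y (lo i) ∧
    T F q i * T F q i = (q - q⁻¹) • T F q i + 1 ∧
    T F q i * Y (lo i) = Y (hi i) * T F q i + (q - q⁻¹) • A ∧
    T F q i * Y (hi i) = Y (lo i) * T F q i - (q - q⁻¹) • A ∧
    T F q i * A = (A - Y (lo i) + Y (hi i)) * T F q i + (q - q⁻¹) • A ∧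
    (A - Y (lo i) + Y (hi i)) * A = Y (lo i) * Y (hi i) - (4 : F) • (1 : H F q n) ∧
    Y (lo i) * A = A * Y (lo i) ∧ Y (hi i) * A = A * Y (hi i) := by
  have rel : ∀ {a b}, Rel F q n a b →
      RingQuot.mkAlgHom F (Rel F q n) a = RingQuot.mkAlgHom F (Rel F q n) b :=
    fun h => RingQuot.mkAlgHom_rel F h
  have hne : hi i ≠ lo i := by simp [hi, lo]
  have hT : T F q i * T F q i = (q - q⁻¹) • T F q i + 1 := by
    simpa only [X, Xinv, C, T, map_mul, map_add, map_one, map_smul] using rel (Rel.Tquad i)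
  have hC (k : Fin n) : C F q k * C F q k = 1 := by
    simpa only [X, Xinv, C, T, map_mul, map_one] using rel (Rel.CC k)
  have hCC : C F q (hi i) * C F q (lo i) = -(C F q (lo i) * C F q (hi i)) := by
    simpa only [X, Xinv, C, T, map_mul, map_neg] using rel (Rel.Canti (q := q) _ _ hne)
  have hTC : T F q i * C F q (lo i) = C F q (hi i) * T F q i := by
    simpa only [X, Xinv, C, T, map_mul] using rel (Rel.TC (q := q) i)
  have hX : (T F q i + (q - q⁻¹) • (C F q (lo i) * C F q (hi i))) * X F q (lo i) * T F q i =
      X F q (hi i) := by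
    simpa only [X, Xinv, C, T, map_mul, map_add, map_smul] using rel (Rel.cross i)
  obtain ⟨cc, tc, tx, ty⟩ :=
    rank_two_straightening (q - q⁻¹) _ _ _ _ _ hT (hC _) (hC _) hCC hTC hX
  have xu (k : Fin n) : X F q k * Xinv F q k = 1 := by
    simpa only [X, Xinv, C, T, map_mul, map_one] using rel (Rel.XXinv k)
  have ux (k : Fin n) : Xinv F q k * X F q k = 1 := by
    simpa only [X, Xinv, C, T, map_mul, map_one] using rel (Rel.XinvX k)
  have yx : X F q (hi i) * X F q (lo i) = X F q (lo i) * X F q (hi i) := by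
    simpa only [X, Xinv, C, T, map_mul] using rel (Rel.XX (q := q) (hi i) (lo i))
  have yu : X F q (hi i) * Xinv F q (lo i) = Xinv F q (lo i) * X F q (hi i) := by
    simpa only [X, Xinv, C, T, map_mul] using rel (Rel.XXi (q := q) _ _ hne)
  have vx : Xinv F q (hi i) * X F q (lo i) = X F q (lo i) * Xinv F q (hi i) := by
    simpa only [X, Xinv, C, T, map_mul] using (rel (Rel.XXi (q := q) _ _ hne.symm)).symm
  have vu : Xinv F q (hi i) * Xinv F q (lo i) = Xinv F q (lo i) * Xinv F q (hi i) := by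
    simpa only [X, Xinv, C, T, map_mul] using rel (Rel.XiXi (q := q) (hi i) (lo i))
  have cx (k : Fin n) : X F q k * C F q k = C F q k * Xinv F q k := by
    simpa only [X, Xinv, C, T, map_mul] using (rel (Rel.CXi (q := q) k)).symm
  have cu (k : Fin n) : Xinv F q k * C F q k = C F q k * X F q k := by
    simpa only [X, Xinv, C, T, map_mul] using (rel (Rel.CX (q := q) k)).symm
  have cxo (k l : Fin n) (h : k ≠ l) : X F q l * C F q k = C F q k * X F q l := by
    simpa only [X, Xinv, C, T, map_mul] using (rel (Rel.CXo (q := q) k l h)).symm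
  have cuo (k l : Fin n) (h : k ≠ l) : Xinv F q l * C F q k = C F q k * Xinv F q l := by
    simpa only [X, Xinv, C, T, map_mul] using (rel (Rel.CXio (q := q) k l h)).symm
  refine ⟨Xinv F q (lo i) - X F q (hi i) +
    C F q (lo i) * C F q (hi i) * (X F q (hi i) - X F q (lo i)), ?_, hT,
    rank_two_identities (q - q⁻¹) _ _ _ _ _ _ (xu _) (ux _) (xu _) (ux _) yx yu vx vu cc
      ?_ ?_ ?_ ?_ tc tx ty⟩
  · simp only [add_mul, mul_add, yx, yu, vx, vu]
    abel
  · rw [← mul_assoc, cx, mul_assoc, cuo _ _ hne, mul_assoc]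
  · rw [← mul_assoc, cu, mul_assoc, cxo _ _ hne, mul_assoc]
  · rw [← mul_assoc, cxo _ _ hne.symm, mul_assoc, cx, mul_assoc]
  · rw [← mul_assoc, cuo _ _ hne.symm, mul_assoc, cu, mul_assoc]

/-- Rank-two transfer of eigenvalues between commuting operators `y₁`, `y₂`. -/
theorem eigenvalue_transfer {F M : Type} [Field F] [IsAlgClosed F] [AddCommGroup M] [Module F M]
    [FiniteDimensional F M] (z : F) (y₁ y₂ t A : Module.End F M)
    (hcomm : y₁ * y₂ = y₂ * y₁) (htt : t * t = z • t + 1)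
    (ht₂ : t * y₂ = y₁ * t - z • A) (htA : t * A = (A - y₁ + y₂) * t + z • A)
    (hA : (A - y₁ + y₂) * A = y₁ * y₂ - (4 : F) • 1)
    (h₁A : y₁ * A = A * y₁) (h₂A : y₂ * A = A * y₂)
    {lam : F} (hlam : y₂.HasEigenvalue lam) :
    y₁.HasEigenvalue lam ∨
      ∃ mu, y₁.HasEigenvalue mu ∧ (mu - lam) ^ 2 = z ^ 2 * (mu * lam - 4) := by
  obtain ⟨mu, v, hv, h₁, h₂⟩ : ∃ (mu : F) (v : M), v ≠ 0 ∧ y₁ v = mu • v ∧ y₂ v = lam • v := by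
    have hmaps : Set.MapsTo y₁ (y₂.eigenspace lam) (y₂.eigenspace lam) := by
      intro w hw
      simp only [SetLike.mem_coe, Module.End.mem_eigenspace_iff] at hw ⊢
      have := LinearMap.congr_fun hcomm w
      simp only [Module.End.mul_apply] at this
      rw [← this, hw, map_smul]
    have : Nontrivial (y₂.eigenspace lam) := Submodule.nontrivial_iff_ne_bot.2 hlam
    obtain ⟨mu, hmu⟩ := Module.End.exists_eigenvalue (y₁.restrict hmaps)
    obtain ⟨v, hv⟩ := hmu.exists_hasEigenvector
    refine ⟨mu, v, by simpa using hv.2, ?_, Module.End.mem_eigenspace_iff.1 v.2⟩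
    exact congrArg Subtype.val hv.apply_eq_smul
  have e₁ : y₁ (t v) = lam • t v + z • A v := by
    have := LinearMap.congr_fun ht₂ v
    simp only [Module.End.mul_apply, LinearMap.sub_apply, LinearMap.smul_apply, h₂,
      map_smul] at this
    rw [this]; abel
  have e₂ : y₁ (A v) = mu • A v := by
    have := LinearMap.congr_fun h₁A v
    simpa only [Module.End.mul_apply, h₁, map_smul] using this
  have e₃ : y₂ (A v) = lam • A v := by
    have := LinearMap.congr_fun h₂A v
    simpa only [Module.End.mul_apply, h₂, map_smul] using this
  by_cases hw : (mu - lam) • t v - z • A v = 0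
  · refine Or.inr ⟨mu, Module.End.hasEigenvalue_of_hasEigenvector
      ⟨Module.End.mem_eigenspace_iff.2 h₁, hv⟩, ?_⟩
    have hw' : (mu - lam) • t v = z • A v := sub_eq_zero.1 hw
    have q₁ : t (t v) = z • t v + v := by simpa using LinearMap.congr_fun htt v
    have q₂ := LinearMap.congr_fun htA v
    have q₃ : A (A v) - mu • A v + lam • A v = (mu * lam) • v - (4 : F) • v := by
      have := LinearMap.congr_fun hA v
      simpa [h₁, h₂, e₂, e₃, smul_smul, mul_comm] using this
    have q₄ : (mu - lam) • t (t v) = z • t (A v) := by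
      rw [← map_smul, hw', map_smul]
    have q₅ : (mu - lam) • t (A v) = z • ((mu * lam) • v - (4 : F) • v) +
        (mu - lam) • z • A v := by
      rw [← Module.End.mul_apply, q₂, LinearMap.add_apply, Module.End.mul_apply, smul_add,
        ← map_smul, hw', map_smul]
      simp only [LinearMap.add_apply, LinearMap.sub_apply, LinearMap.smul_apply, e₂, e₃, q₃]
    have q₆ : ((mu - lam) ^ 2 - z ^ 2 * (mu * lam - 4)) • v = 0 := by
      rw [q₁] at q₄
      linear_combination (norm := module) (mu - lam) • q₄ + z • q₅ - (z * (mu - lam)) • hw'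
    exact sub_eq_zero.1 ((smul_eq_zero.1 q₆).resolve_right hv)
  · refine Or.inl (Module.End.hasEigenvalue_of_hasEigenvector
      (x := (mu - lam) • t v - z • A v) ⟨Module.End.mem_eigenspace_iff.2 ?_, hw⟩)
    rw [map_sub, map_smul, map_smul, e₁, e₂]
    module

/-- Transfer of eigenvalues in both directions, in a representation of an algebra. -/
theorem eigenvalue_transfer_both {F R M : Type} [Field F] [IsAlgClosed F] [Ring R] [Algebra F R]
    [AddCommGroup M] [Module F M] [FiniteDimensional F M] (z : F)
    (ρ : R →ₐ[F] Module.End F M) {y₁ y₂ t A : R}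
    (hc : y₁ * y₂ = y₂ * y₁) (htt : t * t = z • t + 1)
    (ht₁ : t * y₁ = y₂ * t + z • A) (ht₂ : t * y₂ = y₁ * t - z • A)
    (htA : t * A = (A - y₁ + y₂) * t + z • A)
    (hA : (A - y₁ + y₂) * A = y₁ * y₂ - (4 : F) • (1 : R))
    (h₁A : y₁ * A = A * y₁) (h₂A : y₂ * A = A * y₂) :
    (∀ lam, (ρ y₂).HasEigenvalue lam → (ρ y₁).HasEigenvalue lam ∨
      ∃ mu, (ρ y₁).HasEigenvalue mu ∧ (mu - lam) ^ 2 = z ^ 2 * (mu * lam - 4)) ∧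
    (∀ lam, (ρ y₁).HasEigenvalue lam → (ρ y₂).HasEigenvalue lam ∨
      ∃ mu, (ρ y₂).HasEigenvalue mu ∧ (mu - lam) ^ 2 = z ^ 2 * (mu * lam - 4)) := by
  replace hc := congrArg ρ hc
  replace htt := congrArg ρ htt
  replace ht₁ := congrArg ρ ht₁
  replace ht₂ := congrArg ρ ht₂
  replace htA := congrArg ρ htA
  replace hA := congrArg ρ hA
  replace h₁A := congrArg ρ h₁A
  replace h₂A := congrArg ρ h₂A
  simp only [map_mul, map_add, map_sub, map_smul, map_one] at hc htt ht₁ ht₂ htA hA h₁A h₂A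
  refine ⟨fun lam => eigenvalue_transfer z _ _ _ _ hc htt ht₂ htA hA h₁A h₂A,
    fun lam => eigenvalue_transfer z _ _ (ρ t) (-ρ A) hc.symm htt
      (by rw [ht₁, smul_neg, sub_neg_eq_add]) ?_ ?_ (by rw [mul_neg, neg_mul, h₂A])
      (by rw [mul_neg, neg_mul, h₁A])⟩
  · rw [mul_neg, htA, smul_neg, neg_add, ← neg_mul]
    congr 2
    abel
  · rw [← hc, ← hA, mul_neg, ← neg_mul]
    congr 1
    abel

/-- The vanishing of a balanced quantum integer. -/
theorem quantum_sum_eq_zero_iff {F : Type} [Field F] {q : F} (hq0 : q ≠ 0) (hq : q ^ 2 ≠ 1)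
    (h : ℕ) : (∑ k ∈ Finset.range h, q ^ (1 - (h : ℤ) + 2 * (k : ℤ))) = 0 ↔ q ^ (2 * h) = 1 := by
  have e : (∑ k ∈ Finset.range h, q ^ (1 - (h : ℤ) + 2 * (k : ℤ))) =
      q ^ (1 - (h : ℤ)) * ∑ k ∈ Finset.range h, (q ^ 2) ^ k := by
    rw [Finset.mul_sum]
    refine Finset.sum_congr rfl fun k _ => ?_
    rw [zpow_add₀ hq0, zpow_mul]
    norm_cast
  have g := geom_sum_mul (q ^ 2) h
  have hne := sub_ne_zero.2 hq
  rw [e, mul_eq_zero, or_iff_right (zpow_ne_zero _ hq0), ← mul_eq_zero_iff_right hne, g,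
    sub_eq_zero, pow_mul]

theorem GoodParam.add_inv_ne_zero {F : Type} [Field F] (h2 : (2 : F) ≠ 0) {q : F}
    (hq : GoodParam F q) : q + q⁻¹ ≠ 0 := by
  obtain ⟨h0, hq⟩ := hq
  intro h
  have hsq : q ^ 2 = -1 := by field_simp at h; linear_combination h
  have h4 : q ^ 4 = 1 := by linear_combination (q ^ 2 - 1) * hsq
  rcases hq with ⟨m, hm, hp⟩ | hq
  · have : m ∣ 1 := by
      have h' := hp.dvd_of_pow_eq_one 4 h4
      exact (Nat.Coprime.dvd_of_dvd_mul_left (k := m) (m := 4) (n := 1)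
        (hm.coprime_two_right.pow_right 2) (by simpa using h'))
    have hq1 : q = 1 := by
      have := hp.pow_eq_one
      rwa [Nat.dvd_one.1 ‹m ∣ 1›, pow_one] at this
    rw [hq1] at hsq
    exact h2 (by linear_combination hsq)
  · exact hq 4 (by norm_num) h4

theorem memI_pred {F : Type} [Field F] {q : F} {i : ℕ} (hi : memI F q (i + 1)) : memI F q i :=
  fun h hh => by have := hi h hh; omega

/-- The residue following `q(i)` is again of the form `q(i')` with `i' ∈ I`. -/
theorem exists_qres_succ {F : Type} [Field F] {q : F} (hq : GoodParam F q) {i : ℕ}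
    (hi : memI F q i) : ∃ i', memI F q i' ∧ qres F q (i + 1) = qres F q i' := by
  by_cases hq1 : q = 1
  · exact ⟨i, hi, by simp [qres, hq1]⟩
  by_cases hs : memI F q (i + 1)
  · exact ⟨i + 1, hs, rfl⟩
  have hodd : ∀ k : ℕ, 0 < k → q ^ (2 * k) = 1 → q ^ k = 1 := by
    intro k hk h
    rcases hq.2 with ⟨m, hm, hp⟩ | hq
    · exact (hp.pow_eq_one_iff_dvd k).2
        (hm.coprime_two_right.dvd_of_dvd_mul_left (hp.dvd_of_pow_eq_one _ h))
    · exact absurd h (hq _ (by omega))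
  have hq2 : q ^ 2 ≠ 1 := fun h => hq1 (by simpa using hodd 1 one_pos h)
  simp only [memI, not_forall] at hs
  obtain ⟨h, hh, hlt⟩ := hs
  have hle := hi h hh
  obtain ⟨hpos, hsum, hmin⟩ := hh
  have hqh := hodd h hpos ((quantum_sum_eq_zero_iff hq.1 hq2 h).1 hsum)
  obtain rfl | rfl : h = 2 * i + 1 ∨ h = 2 * (i + 1) := by omega
  · cases i with
    | zero => exact absurd (by simpa using hqh) hq1
    | succ i =>
      refine ⟨i, memI_pred hi, ?_⟩
      have e₁ : q ^ (2 * (i + 1 + 1) + 1) = q ^ 2 := by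
        linear_combination q ^ 2 * hqh
      have e₂ : q⁻¹ ^ (2 * i + 1) = q ^ 2 := by
        rw [inv_pow]
        refine inv_eq_of_mul_eq_one_right ?_
        linear_combination hqh
      have e₃ : q ^ (2 * i + 1) = q⁻¹ ^ 2 := by
        rw [← inv_inj, ← inv_pow, e₂]; simp
      have e₄ : q⁻¹ ^ (2 * (i + 1 + 1) + 1) = q⁻¹ ^ 2 := by
        rw [inv_pow, e₁, inv_pow]
      simp only [qres, e₁, e₂, e₃, e₄]
      rw [add_comm (q ^ 2)]
  · exact absurd ((quantum_sum_eq_zero_iff hq.1 hq2 (i + 1)).2 hqh)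
      (hmin (i + 1) (by omega) (by omega))

/-- Solutions of the rank-two equation starting from a residue are residues. -/
theorem exists_qres_of_quadratic {F : Type} [Field F] (h2 : (2 : F) ≠ 0) {q : F}
    (hq : GoodParam F q) {i : ℕ} (hi : memI F q i) {lam : F}
    (h : (qres F q i - lam) ^ 2 = (q - q⁻¹) ^ 2 * (qres F q i * lam - 4)) :
    ∃ i', memI F q i' ∧ lam = qres F q i' := by
  have h0 := hq.1
  have hs := hq.add_inv_ne_zero h2
  have hs' : q ^ 2 + 1 ≠ 0 := by
    intro e; apply hs; field_simp; simpa using e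
  have hfac : ∀ t : F, t ≠ 0 →
      (2 * (t + t⁻¹) / (q + q⁻¹) - lam) ^ 2 =
        (q - q⁻¹) ^ 2 * (2 * (t + t⁻¹) / (q + q⁻¹) * lam - 4) →
      lam = 2 * (t * q ^ 2 + (t * q ^ 2)⁻¹) / (q + q⁻¹) ∨
        lam = 2 * (t * q⁻¹ ^ 2 + (t * q⁻¹ ^ 2)⁻¹) / (q + q⁻¹) := by
    intro t ht e
    rw [← sub_eq_zero, ← sub_eq_zero (b := 2 * (t * q⁻¹ ^ 2 + _) / _), ← mul_eq_zero,
      ← sub_eq_zero.2 e]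
    field_simp
    ring
  have hfac' := hfac (q ^ (2 * i + 1)) (pow_ne_zero _ h0) (by simpa only [qres, inv_pow] using h)
  rcases hfac' with e | e
  · obtain ⟨i', hi', e'⟩ := exists_qres_succ hq hi
    refine ⟨i', hi', ?_⟩
    rw [← e', e, ← pow_add, qres, inv_pow, mul_add_one, add_right_comm]
  · cases i with
    | zero =>
      refine ⟨0, hi, ?_⟩
      have e₁ : q ^ (2 * 0 + 1) * q⁻¹ ^ 2 = q⁻¹ := by field_simp; ring
      rw [e, e₁, qres, inv_inv, add_comm q⁻¹, mul_zero, zero_add, pow_one, pow_one]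
    | succ i =>
      refine ⟨i, memI_pred hi, ?_⟩
      have e₁ : q ^ (2 * (i + 1) + 1) * q⁻¹ ^ 2 = q ^ (2 * i + 1) := by
        field_simp
        ring
      rw [e, e₁, qres, inv_pow]

/-- **Eigenvalues of the `X_k + X_k⁻¹` on a finite-dimensional module** (Lemma
`L210900` of Brundan–Kleshchev): if, on a finite-dimensional `H_n`-module `M`, every
eigenvalue of `X_j + X_j⁻¹` is of the form `q(i)` with `i ∈ I`, then the same holds
for every `X_k + X_k⁻¹`, `k = 1, …, n`. -/
theorem eigenvalues_spread
    (F : Type) [Field F] [IsAlgClosed F] (h2 : (2 : F) ≠ 0)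
    (q : F) (hq : GoodParam F q) (n : ℕ)
    (M : Type) [AddCommGroup M] [Module F M] [FiniteDimensional F M]
    (ρ : H F q n →ₐ[F] Module.End F M) (j : Fin n)
    (hj : ∀ lam : F,
      LinearMap.ker (ρ (X F q j + Xinv F q j) - lam • (1 : Module.End F M)) ≠ ⊥ →
        ∃ i : ℕ, memI F q i ∧ lam = qres F q i) :
    ∀ (k : Fin n) (lam : F),
      LinearMap.ker (ρ (X F q k + Xinv F q k) - lam • (1 : Module.End F M)) ≠ ⊥ →
        ∃ i : ℕ, memI F q i ∧ lam = qres F q i := by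
  let good : Fin n → Prop := fun k => ∀ lam : F,
    (ρ (X F q k + Xinv F q k)).HasEigenvalue lam → ∃ i : ℕ, memI F q i ∧ lam = qres F q i
  have key : ∀ {y₁ y₂ : Module.End F M}, (∀ {lam}, y₂.HasEigenvalue lam →
      y₁.HasEigenvalue lam ∨ ∃ mu, y₁.HasEigenvalue mu ∧
        (mu - lam) ^ 2 = (q - q⁻¹) ^ 2 * (mu * lam - 4)) →
      (∀ lam, y₁.HasEigenvalue lam → ∃ i : ℕ, memI F q i ∧ lam = qres F q i) →
      ∀ lam, y₂.HasEigenvalue lam → ∃ i : ℕ, memI F q i ∧ lam = qres F q i := by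
    intro y₁ y₂ htr hy lam hlam
    rcases htr hlam with h | ⟨mu, hmu, h⟩
    · exact hy lam h
    · obtain ⟨i, hi, rfl⟩ := hy mu hmu
      exact exists_qres_of_quadratic h2 hq hi h
  have step : ∀ i : Fin (n - 1), good (lo i) ↔ good (hi i) := by
    intro i
    obtain ⟨A, hc, htt, ht₁, ht₂, htA, hA, h₁A, h₂A⟩ := exists_intertwining_correction q i
    have htr := eigenvalue_transfer_both (q - q⁻¹) ρ hc htt ht₁ ht₂ htA hA h₁A h₂A
    exact ⟨key fun h => htr.1 _ h, key fun h => htr.2 _ h⟩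
  have all : ∀ (m : ℕ) (hm : m < n), good ⟨m, hm⟩ ↔ good ⟨0, by omega⟩ := by
    intro m
    induction m with
    | zero => intro _; rfl
    | succ m ih =>
      intro hm
      exact (step ⟨m, by omega⟩).symm.trans (ih (by omega))
  have hgood : ∀ k, good k ↔ ∀ lam : F,
      LinearMap.ker (ρ (X F q k + Xinv F q k) - lam • (1 : Module.End F M)) ≠ ⊥ →
        ∃ i : ℕ, memI F q i ∧ lam = qres F q i := by
    intro k
    simp only [good, Module.End.hasEigenvalue_iff, Module.End.eigenspace_def]
  intro k
  rw [← hgood] at hj ⊢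
  exact (all k.1 k.2).2 ((all j.1 j.2).1 hj)

end HC
end

section
/- Every irreducible integral H_n-module L is self-dual: L ≅ L^τ. -/
set_option maxHeartbeats 1000000

/-- A property of words over `ℕ` compatible with the braid relations, cyclic rotations and true on
words with a repeated adjacent letter and on strictly increasing words. -/
structure CyclicBraidInvariant (S : List ℕ → Prop) : Prop where
  comm : ∀ u v a b, a + 1 < b → (S (u ++ a :: b :: v) ↔ S (u ++ b :: a :: v))
  braid : ∀ u v a, S (u ++ a :: (a + 1) :: a :: v) → S (u ++ (a + 1) :: a :: (a + 1) :: v)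
  dup : ∀ u v a, S (u ++ a :: a :: v)
  rot : ∀ u a, S (u ++ [a]) → S (a :: u)
  inc : ∀ u : List ℕ, u.Pairwise (· < ·) → S u

namespace CyclicBraidInvariant

variable {S : List ℕ → Prop}

theorem move_right (hS : CyclicBraidInvariant S) (b : ℕ) (z : List ℕ) :
    ∀ (_ : ∀ a ∈ z, a + 1 < b) (u v : List ℕ), S (u ++ b :: (z ++ v)) ↔ S (u ++ z ++ b :: v) := by
  induction z with
  | nil => intro _ u v; simp
  | cons a z ih =>
    intro hz u v
    have h1 := hS.comm u (z ++ v) a b (hz a (by simp))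
    have h2 := ih (fun a ha => hz a (by simp [ha])) (u ++ [a]) v
    simp only [List.append_assoc, List.cons_append, List.nil_append] at h1 h2 ⊢
    rw [← h1, h2]

theorem move_word_right (hS : CyclicBraidInvariant S) (y z : List ℕ) :
    ∀ (_ : ∀ b ∈ y, ∀ a ∈ z, a + 1 < b) (u : List ℕ), S (u ++ (y ++ z)) ↔ S (u ++ (z ++ y)) := by
  induction y with
  | nil => intro _ u; simp
  | cons b y ih =>
    intro hy u
    have h1 := ih (fun b hb => hy b (by simp [hb])) (u ++ [b])
    have h2 := hS.move_right b z (hy b (by simp)) u y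
    simp only [List.append_assoc, List.cons_append, List.nil_append] at h1 h2 ⊢
    rw [h1, h2]

theorem rotate (hS : CyclicBraidInvariant S) (u : List ℕ) :
    ∀ v, S (v ++ u) → S (u ++ v) := by
  induction u with
  | nil => intro v h; simpa using h
  | cons a u ih =>
    intro v h
    refine hS.rot (u ++ v) a ?_
    have := ih (v ++ [a]) (by simpa using h)
    simpa using this

/-- A word in the letters `0, …, m` can be rewritten so that `m` occurs at most once. -/
theorem exists_count_le_one (hS : CyclicBraidInvariant S) (m : ℕ) :
    ∀ u : List ℕ, (∀ a ∈ u, a ≤ m) → (∀ x y, S (x ++ (u ++ y))) ∨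
      ∃ u' : List ℕ, (∀ a ∈ u', a ≤ m) ∧ u'.count m ≤ 1 ∧
        ∀ x y, S (x ++ (u' ++ y)) → S (x ++ (u ++ y)) := by
  induction m with
  | zero =>
    intro u hu
    match u, hu with
    | [], _ => exact Or.inr ⟨[], by simp⟩
    | [a], hu => exact Or.inr ⟨[a], hu, List.count_le_length, fun _ _ h => h⟩
    | a :: b :: u, hu =>
      left
      intro x y
      have ha : a = 0 := by simpa using hu a (by simp)
      have hb : b = 0 := by simpa using hu b (by simp)
      subst ha hb
      simpa using hS.dup x (u ++ y) 0
  | succ m ihm =>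
    intro u hu
    induction hk : u.count (m + 1) using Nat.strong_induction_on generalizing u with
    | _ k ihk =>
    by_cases hk1 : k ≤ 1
    · exact Or.inr ⟨u, hu, hk ▸ hk1, fun _ _ h => h⟩
    have hmem : m + 1 ∈ u := List.count_pos_iff.1 (by omega)
    obtain ⟨x₁, r, rfl, hx₁⟩ := List.eq_append_cons_of_mem hmem
    have hmem' : m + 1 ∈ r := by
      apply List.count_pos_iff.1
      simp [List.count_eq_zero_of_not_mem hx₁] at hk
      omega
    obtain ⟨z, y₁, rfl, hz⟩ := List.eq_append_cons_of_mem hmem'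
    have hzm : ∀ a ∈ z, a ≤ m := by
      intro a ha
      have h1 := hu a (by simp [ha])
      have h2 : a ≠ m + 1 := fun h => hz (h ▸ ha)
      omega
    rcases ihm z hzm with hall | ⟨z', hz', hcz, himp⟩
    · left
      intro x y
      simpa using hall (x ++ x₁ ++ [m + 1]) ((m + 1) :: (y₁ ++ y))
    by_cases hmz : m ∈ z'
    · obtain ⟨z₁, z₂, rfl, hz₁⟩ := List.eq_append_cons_of_mem hmz
      have hz₂ : m ∉ z₂ := by
        intro h
        have := List.count_pos_iff.2 h
        simp at hcz
        omega
      have hz₁m : ∀ a ∈ z₁, a + 1 < m + 1 := by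
        intro a ha
        have h1 := hz' a (by simp [ha])
        have h2 : a ≠ m := fun h => hz₁ (h ▸ ha)
        omega
      have hz₂m : ∀ a ∈ z₂, a + 1 < m + 1 := by
        intro a ha
        have h1 := hz' a (by simp [ha])
        have h2 : a ≠ m := fun h => hz₂ (h ▸ ha)
        omega
      have key : ∀ x y, S (x ++ ((x₁ ++ (z₁ ++ m :: (m + 1) :: m :: (z₂ ++ y₁))) ++ y)) →
          S (x ++ ((x₁ ++ (m + 1) :: (z ++ (m + 1) :: y₁)) ++ y)) := by
        intro x y h
        have h1 := hS.braid (x ++ (x₁ ++ z₁)) (z₂ ++ (y₁ ++ y)) m (by simpa using h)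
        have h2 := (hS.move_right (m + 1) z₁ hz₁m (x ++ x₁)
          (m :: (m + 1) :: (z₂ ++ (y₁ ++ y)))).2 (by simpa using h1)
        have h3 := (hS.move_right (m + 1) z₂ hz₂m (x ++ x₁ ++ (m + 1) :: (z₁ ++ [m]))
          (y₁ ++ y)).1 (by simpa using h2)
        have h4 := himp (x ++ x₁ ++ [m + 1]) ((m + 1) :: (y₁ ++ y)) (by simpa using h3)
        simpa using h4
      have hc1 : z₁.count (m + 1) = 0 :=
        List.count_eq_zero_of_not_mem fun h => by have := hz₁m _ h; omega
      have hc2 : z₂.count (m + 1) = 0 :=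
        List.count_eq_zero_of_not_mem fun h => by have := hz₂m _ h; omega
      have hc3 : x₁.count (m + 1) = 0 := List.count_eq_zero_of_not_mem hx₁
      have hc4 : z.count (m + 1) = 0 := List.count_eq_zero_of_not_mem hz
      have hle : ∀ a ∈ x₁ ++ (z₁ ++ m :: (m + 1) :: m :: (z₂ ++ y₁)), a ≤ m + 1 := by
        intro a ha
        simp only [List.mem_append, List.mem_cons] at ha
        rcases ha with h | h | h | h | h | h | h
        · exact hu a (by simp [h])
        · have := hz₁m a h; omega
        · omega
        · omega
        · omega
        · have := hz₂m a h; omega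
        · exact hu a (by simp [h])
      rcases ihk _ (by simp [hc1, hc2, hc3, hc4] at hk ⊢; omega) _ hle rfl with hall | ⟨u', h1, h2, h3⟩
      · exact Or.inl fun x y => key x y (hall x y)
      · exact Or.inr ⟨u', h1, h2, fun x y h => key x y (h3 x y h)⟩
    · left
      intro x y
      have hz'm : ∀ a ∈ z', a + 1 < m + 1 := by
        intro a ha
        have h1 := hz' a ha
        have h2 : a ≠ m := fun h => hmz (h ▸ ha)
        omega
      have h1 := hS.dup (x ++ (x₁ ++ z')) (y₁ ++ y) (m + 1)
      have h2 := (hS.move_right (m + 1) z' hz'm (x ++ x₁) ((m + 1) :: (y₁ ++ y))).2 (by simpa using h1)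
      have h4 := himp (x ++ x₁ ++ [m + 1]) ((m + 1) :: (y₁ ++ y)) (by simpa using h2)
      simpa using h4

theorem append_of_lt (hS : CyclicBraidInvariant S) (j : ℕ) :
    ∀ u v : List ℕ, (∀ a ∈ u, a < j) → (∀ b ∈ v, j ≤ b) → v.Pairwise (· < ·) → S (u ++ v) := by
  induction j with
  | zero =>
    intro u v hu _ hv
    have : u = [] := List.eq_nil_iff_forall_not_mem.2 fun a ha => by simpa using hu a ha
    subst this
    exact hS.inc v hv
  | succ j ih =>
    intro u v hu hjv hv
    rcases hS.exists_count_le_one j u (fun a ha => Nat.lt_succ_iff.1 (hu a ha)) with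
      hall | ⟨u', hu', hc, himp⟩
    · simpa using hall [] v
    refine himp [] v ?_
    rw [List.nil_append]
    by_cases hj : j ∈ u'
    · obtain ⟨z₁, z₂, rfl, hz₁⟩ := List.eq_append_cons_of_mem hj
      have hz₂ : j ∉ z₂ := by
        intro h
        have := List.count_pos_iff.2 h
        simp at hc
        omega
      have h1 : S ((z₂ ++ z₁) ++ (j :: v)) := by
        refine ih _ _ ?_ ?_ ?_
        · intro a ha
          have h1 : a ≤ j := hu' a (by simp only [List.mem_append, List.mem_cons] at ha ⊢; tauto)
          have h2 : a ≠ j := by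
            rintro rfl
            simp only [List.mem_append] at ha
            tauto
          omega
        · intro b hb
          rcases List.mem_cons.1 hb with rfl | hb
          · exact le_rfl
          · have := hjv b hb
            omega
        · refine List.pairwise_cons.2 ⟨fun b hb => ?_, hv⟩
          have := hjv b hb
          omega
      have h2 := hS.rotate (z₁ ++ j :: v) z₂ (by simpa using h1)
      have h3 := (hS.move_word_right v z₂ ?_ (z₁ ++ [j])).1 (by simpa using h2)
      · simpa using h3
      · intro b hb a ha
        have h1 := hjv b hb
        have h2 := hu' a (by simp [ha])
        have h3 : a ≠ j := fun h => hz₂ (h ▸ ha)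
        omega
    · refine ih _ _ (fun a ha => ?_) (fun b hb => by have := hjv b hb; omega) hv
      have h1 := hu' a ha
      have h2 : a ≠ j := fun h => hj (h ▸ ha)
      omega

theorem all (hS : CyclicBraidInvariant S) (w : List ℕ) : S w := by
  have := hS.append_of_lt (w.sum + 1) w []
    (fun a ha => Nat.lt_succ_iff.2 (List.single_le_sum (by simp) a ha)) (by simp) (by simp)
  simpa using this

end CyclicBraidInvariant

/-- The subalgebra generated by the letters `x i b` and `c i`. -/
def polyCliff (F : Type*) {A : Type*} [CommRing F] [Ring A] [Algebra F A]
    (x : ℕ → Bool → A) (c : ℕ → A) : Subalgebra F A :=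
  Algebra.adjoin F ((Set.range fun p : ℕ × Bool => x p.1 p.2) ∪ Set.range c)

/-- Relations of Hecke–Clifford type, recorded only up to terms in `polyCliff` where the precise
lower order term is irrelevant.  The letters `x i true` and `x i false` stand for `X_i` and
`X_i⁻¹`. -/
structure HeckeCliffordRel (F : Type*) {A : Type*} [CommRing F] [Ring A] [Algebra F A]
    (x : ℕ → Bool → A) (c t : ℕ → A) : Prop where
  x_comm : ∀ i a j b, Commute (x i a) (x j b)
  c_sq : ∀ i, ∃ e : F, c i * c i = algebraMap F A e
  c_anti : ∀ i j, i ≠ j → c i * c j = -(c j * c i)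
  c_x : ∀ i b, c i * x i b = x i (!b) * c i
  c_x_far : ∀ i j b, i ≠ j → Commute (c i) (x j b)
  t_sq : ∀ i, ∃ d e : F, t i * t i = algebraMap F A d * t i + algebraMap F A e
  t_braid : ∀ i, t i * t (i + 1) * t i = t (i + 1) * t i * t (i + 1)
  t_far : ∀ i j, i + 1 < j → Commute (t i) (t j)
  t_c_far : ∀ i j, j ≠ i → j ≠ i + 1 → Commute (t i) (c j)
  t_x_far : ∀ i j b, j ≠ i → j ≠ i + 1 → Commute (t i) (x j b)
  t_c_lo : ∀ i, t i * c i - c (i + 1) * t i ∈ polyCliff F x c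
  t_c_hi : ∀ i, t i * c (i + 1) - c i * t i ∈ polyCliff F x c
  t_x_lo : ∀ i b, t i * x i b - x (i + 1) b * t i ∈ polyCliff F x c
  t_x_hi : ∀ i b, t i * x (i + 1) b - x i b * t i ∈ polyCliff F x c

namespace HeckeCliffordRel

variable {F A : Type*} [CommRing F] [Ring A] [Algebra F A] {x : ℕ → Bool → A} {c t : ℕ → A}

/-- The monomial attached to a word of `x`-letters. -/
def xWord (x : ℕ → Bool → A) (xs : List (ℕ × Bool)) : A := (xs.map fun p => x p.1 p.2).prod

/-- The product of the letters of a word. -/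
def word (t : ℕ → A) (w : List ℕ) : A := (w.map t).prod

@[simp] theorem word_nil (t : ℕ → A) : word t [] = 1 := rfl
@[simp] theorem word_cons (t : ℕ → A) (a : ℕ) (w : List ℕ) :
    word t (a :: w) = t a * word t w := by simp [word]
@[simp] theorem word_append (t : ℕ → A) (v w : List ℕ) :
    word t (v ++ w) = word t v * word t w := by simp [word]
@[simp] theorem xWord_nil (x : ℕ → Bool → A) : xWord x [] = 1 := rfl
@[simp] theorem xWord_cons (x : ℕ → Bool → A) (p : ℕ × Bool) (w : List (ℕ × Bool)) :
    xWord x (p :: w) = x p.1 p.2 * xWord x w := by simp [xWord]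
@[simp] theorem xWord_append (x : ℕ → Bool → A) (v w : List (ℕ × Bool)) :
    xWord x (v ++ w) = xWord x v * xWord x w := by simp [xWord]

theorem commute_word {y : A} {w : List ℕ} (h : ∀ i ∈ w, Commute y (t i)) :
    Commute y (word t w) := by
  induction w with
  | nil => simp
  | cons a w ih =>
    rw [word_cons]
    exact (h a (by simp)).mul_right (ih fun i hi => h i (by simp [hi]))

theorem commute_xWord {y : A} {xs : List (ℕ × Bool)}
    (h : ∀ p ∈ xs, Commute y (x p.1 p.2)) : Commute y (xWord x xs) := by
  induction xs with
  | nil => simp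
  | cons a w ih =>
    rw [xWord_cons]
    exact (h a (by simp)).mul_right (ih fun i hi => h i (by simp [hi]))

theorem x_mem (F : Type*) [CommRing F] [Algebra F A] (i : ℕ) (b : Bool) :
    x i b ∈ polyCliff F x c :=
  Algebra.subset_adjoin (Or.inl ⟨(i, b), rfl⟩)

theorem c_mem (F : Type*) [CommRing F] [Algebra F A] (i : ℕ) :
    c i ∈ polyCliff F x c :=
  Algebra.subset_adjoin (Or.inr ⟨i, rfl⟩)

/-- The span of the elements `p * t_w` with `p` in `polyCliff` and `w` a word of length `< k`. -/
def lower (F : Type*) [CommRing F] [Algebra F A] (x : ℕ → Bool → A) (c t : ℕ → A) (k : ℕ) :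
    Submodule F A :=
  Submodule.span F {y | ∃ p ∈ polyCliff F x c, ∃ w : List ℕ, w.length < k ∧ y = p * word t w}

theorem mem_lower {p : A} (hp : p ∈ polyCliff F x c) {w : List ℕ} {k : ℕ} (hw : w.length < k) :
    p * word t w ∈ lower F x c t k :=
  Submodule.subset_span ⟨p, hp, w, hw, rfl⟩

theorem lower_mono {k l : ℕ} (h : k ≤ l) : lower F x c t k ≤ lower F x c t l :=
  Submodule.span_mono fun _ ⟨p, hp, w, hw, e⟩ => ⟨p, hp, w, hw.trans_le h, e⟩

/-- To prove that a linear map sends `lower k` into a submodule it suffices to check generators. -/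
theorem map_lower {B : Type*} [AddCommGroup B] [Module F B] {k : ℕ} (f : A →ₗ[F] B)
    (N : Submodule F B)
    (h : ∀ p ∈ polyCliff F x c, ∀ w : List ℕ, w.length < k → f (p * word t w) ∈ N)
    {y : A} (hy : y ∈ lower F x c t k) : f y ∈ N := by
  have : lower F x c t k ≤ N.comap f := by
    refine Submodule.span_le.2 ?_
    rintro _ ⟨p, hp, w, hw, rfl⟩
    exact h p hp w hw
  exact this hy

theorem mul_mem_lower {p y : A} (hp : p ∈ polyCliff F x c) {k : ℕ}
    (hy : y ∈ lower F x c t k) : p * y ∈ lower F x c t k := by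
  refine map_lower (LinearMap.mulLeft F p) _ (fun p' hp' w hw => ?_) hy
  rw [LinearMap.mulLeft_apply, ← mul_assoc]
  exact mem_lower (mul_mem hp hp') hw

theorem lower_mul_word {y : A} {k : ℕ} (hy : y ∈ lower F x c t k) (v : List ℕ) :
    y * word t v ∈ lower F x c t (k + v.length) := by
  refine map_lower (LinearMap.mulRight F (word t v)) _ (fun p' hp' w hw => ?_) hy
  rw [LinearMap.mulRight_apply, mul_assoc, ← word_append]
  exact mem_lower hp' (by simpa using hw)

theorem t_mul (hR : HeckeCliffordRel F x c t) (i : ℕ) {p : A} (hp : p ∈ polyCliff F x c) :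
    ∃ p' ∈ polyCliff F x c, t i * p - p' * t i ∈ polyCliff F x c := by
  induction hp using Algebra.adjoin_induction with
  | mem y hy =>
    rcases hy with ⟨⟨j, b⟩, rfl⟩ | ⟨j, rfl⟩
    · dsimp only
      by_cases h1 : j = i
      · subst h1
        exact ⟨_, x_mem F _ b, hR.t_x_lo j b⟩
      by_cases h2 : j = i + 1
      · subst h2
        exact ⟨_, x_mem F _ b, hR.t_x_hi i b⟩
      · exact ⟨_, x_mem F j b, by rw [(hR.t_x_far i j b h1 h2).eq, sub_self]; exact zero_mem _⟩
    · by_cases h1 : j = i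
      · subst h1
        exact ⟨_, c_mem F _, hR.t_c_lo j⟩
      by_cases h2 : j = i + 1
      · subst h2
        exact ⟨_, c_mem F _, hR.t_c_hi i⟩
      · exact ⟨_, c_mem F j, by rw [(hR.t_c_far i j h1 h2).eq, sub_self]; exact zero_mem _⟩
  | algebraMap r =>
    exact ⟨_, Subalgebra.algebraMap_mem _ r, by
      rw [(Algebra.commutes r (t i)), sub_self]; exact zero_mem _⟩
  | add a b _ _ iha ihb =>
    obtain ⟨a', ha', ea⟩ := iha
    obtain ⟨b', hb', eb⟩ := ihb
    refine ⟨a' + b', add_mem ha' hb', ?_⟩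
    convert add_mem ea eb using 1
    noncomm_ring
  | mul a b ha hb iha ihb =>
    obtain ⟨a', ha', ea⟩ := iha
    obtain ⟨b', hb', eb⟩ := ihb
    refine ⟨a' * b', mul_mem ha' hb', ?_⟩
    convert add_mem (mul_mem ea hb) (mul_mem ha' eb) using 1
    noncomm_ring

theorem t_mul_lower (hR : HeckeCliffordRel F x c t) (i : ℕ) {y : A} {k : ℕ}
    (hy : y ∈ lower F x c t k) : t i * y ∈ lower F x c t (k + 1) := by
  refine map_lower (LinearMap.mulLeft F (t i)) _ (fun p hp w hw => ?_) hy
  obtain ⟨p', hp', e⟩ := hR.t_mul i hp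
  rw [LinearMap.mulLeft_apply]
  have h1 : p' * word t (i :: w) ∈ lower F x c t (k + 1) := mem_lower hp' (by simpa using hw)
  have h2 : (t i * p - p' * t i) * word t w ∈ lower F x c t (k + 1) := mem_lower e (by omega)
  convert add_mem h1 h2 using 1
  rw [word_cons]
  noncomm_ring

theorem word_mul (hR : HeckeCliffordRel F x c t) (u : List ℕ) {p : A}
    (hp : p ∈ polyCliff F x c) :
    ∃ p' ∈ polyCliff F x c, word t u * p - p' * word t u ∈ lower F x c t u.length := by
  induction u with
  | nil => exact ⟨p, hp, by simp⟩
  | cons a u ih =>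
    obtain ⟨p', hp', e⟩ := ih
    obtain ⟨p'', hp'', e'⟩ := hR.t_mul a hp'
    refine ⟨p'', hp'', ?_⟩
    have h1 := hR.t_mul_lower a e
    have h2 : (t a * p' - p'' * t a) * word t u ∈ lower F x c t (u.length + 1) :=
      mem_lower e' (by omega)
    rw [List.length_cons, word_cons]
    convert add_mem h1 h2 using 1
    noncomm_ring

theorem lower_mul (hR : HeckeCliffordRel F x c t) {p : A} (hp : p ∈ polyCliff F x c) {k : ℕ}
    {y : A} (hy : y ∈ lower F x c t k) : y * p ∈ lower F x c t k := by
  refine map_lower (LinearMap.mulRight F p) _ (fun p' hp' w hw => ?_) hy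
  obtain ⟨p'', hp'', e⟩ := hR.word_mul w hp
  rw [LinearMap.mulRight_apply]
  convert add_mem (mem_lower (mul_mem hp' hp'') hw)
    (mul_mem_lower hp' (lower_mono hw.le e)) using 1
  noncomm_ring

/-- Moving a letter through a strictly increasing word, modulo shorter words. -/
theorem word_mul_letter (hR : HeckeCliffordRel F x c t) {u v : List ℕ} {j : ℕ}
    (hu : ∀ i ∈ u, i < j) (hv : ∀ i ∈ v, j < i) {r r' : A}
    (hr : ∀ i, j < i → Commute r (t i)) (hr' : ∀ i, i < j → Commute r' (t i))
    (e : t j * r - r' * t j ∈ polyCliff F x c) :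
    word t (u ++ j :: v) * r - r' * word t (u ++ j :: v) ∈
      lower F x c t (u ++ j :: v).length := by
  have h1 : Commute r (word t v) := commute_word fun i hi => hr i (hv i hi)
  have h2 : Commute r' (word t u) := commute_word fun i hi => hr' i (hu i hi)
  obtain ⟨p', hp', e'⟩ := hR.word_mul u e
  have h3 : (u.length + v.length) ≤ (u ++ j :: v).length := by simp
  convert add_mem (lower_mono h3 (lower_mul_word e' v))
    (mem_lower hp' (w := u ++ v) (k := (u ++ j :: v).length) (by simp)) using 1
  simp only [word_append, word_cons]
  calc word t u * (t j * word t v) * r - r' * (word t u * (t j * word t v))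
      = word t u * t j * (word t v * r) - (r' * word t u) * (t j * word t v) := by noncomm_ring
    _ = word t u * t j * (r * word t v) - (word t u * r') * (t j * word t v) := by
      rw [h1.eq, h2.eq]
    _ = _ := by noncomm_ring

/-- Reordering a word of anticommuting letters changes its value by a sign. -/
theorem word_perm (hR : HeckeCliffordRel F x c t) {u v : List ℕ} (h : u.Perm v) :
    word c u = word c v ∨ word c u = -word c v := by
  induction h with
  | nil => simp
  | cons a _ ih =>
    simp only [word_cons]
    rcases ih with ih | ih <;> simp [ih]
  | swap a b l =>
    simp only [word_cons, ← mul_assoc]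
    by_cases hab : b = a
    · simp [hab]
    · right
      rw [hR.c_anti b a hab, neg_mul]
  | trans _ _ ih1 ih2 =>
    rcases ih1 with h1 | h1 <;> rcases ih2 with h2 | h2 <;> simp [h1, h2]

theorem xWord_perm (hR : HeckeCliffordRel F x c t) {u v : List (ℕ × Bool)} (h : u.Perm v) :
    xWord x u = xWord x v := by
  induction h with
  | nil => rfl
  | cons a _ ih => simp [ih]
  | swap a b l =>
    simp only [xWord_cons, ← mul_assoc]
    rw [(hR.x_comm _ _ _ _).eq]
  | trans _ _ ih1 ih2 => rw [ih1, ih2]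

theorem x_mul_word_c (hR : HeckeCliffordRel F x c t) (i : ℕ) (cs : List ℕ) :
    ∀ b, ∃ b', x i b * word c cs = word c cs * x i b' := by
  induction cs with
  | nil => exact fun b => ⟨b, by simp⟩
  | cons a cs ih =>
    intro b
    by_cases h : a = i
    · subst h
      obtain ⟨b', hb'⟩ := ih (!b)
      refine ⟨b', ?_⟩
      have := hR.c_x a (!b)
      rw [Bool.not_not] at this
      rw [word_cons, ← mul_assoc, ← this, mul_assoc, hb', mul_assoc]
    · obtain ⟨b', hb'⟩ := ih b
      exact ⟨b', by rw [word_cons, ← mul_assoc, ← (hR.c_x_far a i b h).eq, mul_assoc, hb',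
        mul_assoc]⟩

theorem c_mul_xWord (hR : HeckeCliffordRel F x c t) (i : ℕ) (xs : List (ℕ × Bool)) :
    ∃ xs' : List (ℕ × Bool), xs'.map Prod.fst = xs.map Prod.fst ∧
      c i * xWord x xs = xWord x xs' * c i := by
  induction xs with
  | nil => exact ⟨[], by simp⟩
  | cons p xs ih =>
    obtain ⟨xs', h1, h2⟩ := ih
    obtain ⟨j, b⟩ := p
    by_cases h : i = j
    · subst h
      refine ⟨(i, !b) :: xs', by simp [h1], ?_⟩
      simp only [xWord_cons]
      rw [← mul_assoc, hR.c_x, mul_assoc, h2, mul_assoc]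
    · refine ⟨(j, b) :: xs', by simp [h1], ?_⟩
      simp only [xWord_cons]
      rw [← mul_assoc, (hR.c_x_far i j b h).eq, mul_assoc, h2, mul_assoc]

/-- A linear functional vanishes on `polyCliff * y` as soon as it does so on monomials. -/
theorem polyCliff_induction (hR : HeckeCliffordRel F x c t) (N : Submodule F A)
    (h : ∀ xs cs, xWord x xs * word c cs ∈ N) {p : A} (hp : p ∈ polyCliff F x c) : p ∈ N := by
  have hle : Subalgebra.toSubmodule (polyCliff F x c) ≤ N := by
    rw [polyCliff, Algebra.adjoin_eq_span, Submodule.span_le]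
    intro y hy
    suffices ∃ xs cs, y = xWord x xs * word c cs by
      obtain ⟨xs, cs, rfl⟩ := this
      exact h xs cs
    induction hy using Submonoid.closure_induction_left with
    | one => exact ⟨[], [], by simp⟩
    | mul_left a ha y _ ih =>
      obtain ⟨xs, cs, rfl⟩ := ih
      rcases ha with ⟨⟨j, b⟩, rfl⟩ | ⟨j, rfl⟩
      · exact ⟨(j, b) :: xs, cs, by simp [mul_assoc]⟩
      · obtain ⟨xs', -, e⟩ := hR.c_mul_xWord j xs
        exact ⟨xs', j :: cs, by rw [← mul_assoc, e, word_cons, mul_assoc]⟩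
  exact hle hp

section Trace

variable {g : A →ₗ[F] F}

/-- In a trace of a product along a strictly increasing word, the smallest letter can be moved to
the end. -/
theorem trace_move_head (hR : HeckeCliffordRel F x c t) (hg : ∀ a b, g (a * b) = g (b * a))
    (w : List ℕ) : ∀ (a : ℕ) (z : A), (a :: w).Pairwise (· < ·) →
      (∀ i ∈ w, ∀ j ∈ a :: w, i = j + 1 → Commute z (t i)) →
      g (z * t a * word t w) = g (z * word t w * t a) := by
  induction w with
  | nil => intro a z _ _; simp
  | cons b w ih =>
    intro a z hw hz
    obtain ⟨ha, hbw⟩ := List.pairwise_cons.1 hw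
    obtain ⟨hb, hw'⟩ := List.pairwise_cons.1 hbw
    have hab : a < b := ha b (by simp)
    have hcomm : Commute (t a) (word t w) := commute_word fun i hi =>
      hR.t_far a i (by have := hb i hi; omega)
    by_cases h : b = a + 1
    · have hzb : Commute z (t b) := hz b (by simp) a (by simp) h
      have key := ih b (z * t a) hbw (by
        intro i hi j hj hij
        have hi' := hb i hi
        refine (hz i (by simp [hi]) j (List.mem_cons_of_mem _ hj) hij).mul_left ?_
        exact hR.t_far a i (by omega))
      calc g (z * t a * word t (b :: w)) = g (z * t a * t b * word t w) := by
            rw [word_cons, ← mul_assoc]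
        _ = g (z * t a * word t w * t b) := key
        _ = g (t b * (z * t a * word t w)) := hg _ _
        _ = g ((t b * z) * (t a * word t w)) := by simp only [mul_assoc]
        _ = g ((z * t b) * (word t w * t a)) := by rw [hzb.eq, hcomm.eq]
        _ = g (z * word t (b :: w) * t a) := by simp only [word_cons, mul_assoc]
    · have hcb : Commute (t a) (t b) := hR.t_far a b (by omega)
      rw [word_cons, mul_assoc, mul_assoc, (hcb.mul_right hcomm).eq]

/-- A trace does not distinguish a strictly increasing word from its reverse. -/
theorem trace_reverse (hR : HeckeCliffordRel F x c t) (hg : ∀ a b, g (a * b) = g (b * a))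
    (w : List ℕ) : ∀ z : A, w.Pairwise (· < ·) →
      (∀ i ∈ w, ∀ j ∈ w, i = j + 1 → Commute z (t i)) →
      g (z * word t w) = g (z * word t w.reverse) := by
  induction w with
  | nil => intro z _ _; simp
  | cons a w ih =>
    intro z hw hz
    obtain ⟨ha, hw'⟩ := List.pairwise_cons.1 hw
    have key := ih (t a * z) hw' (by
      intro i hi j hj hij
      have hi' := ha j hj
      refine Commute.mul_left ?_ (hz i (by simp [hi]) j (by simp [hj]) hij)
      exact hR.t_far a i (by omega))
    calc g (z * word t (a :: w)) = g (z * t a * word t w) := by rw [word_cons, ← mul_assoc]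
      _ = g (z * word t w * t a) :=
        hR.trace_move_head hg w a z hw fun i hi j hj hij => hz i (by simp [hi]) j hj hij
      _ = g (t a * z * word t w) := by rw [hg, mul_assoc]
      _ = g (t a * (z * word t w.reverse)) := by rw [key, mul_assoc]
      _ = g (z * word t (a :: w).reverse) := by
        rw [hg, List.reverse_cons, word_append, word_cons, word_nil, mul_one, mul_assoc]

/-- The data of a trace form which is invariant under the grading automorphism `δ` and
anti-invariant under the antiautomorphism `τ`. -/
structure IsAntiTrace (x : ℕ → Bool → A) (c t : ℕ → A) (δ : A →ₐ[F] A) (τ : A →ₗ[F] A)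
    (g : A →ₗ[F] F) : Prop where
  two : ∀ r : F, r = -r → r = 0
  comm : ∀ a b, g (a * b) = g (b * a)
  δ_x : ∀ i b, δ (x i b) = x i b
  δ_c : ∀ i, δ (c i) = -c i
  δ_t : ∀ i, δ (t i) = t i
  g_δ : ∀ a, g (δ a) = g a
  τ_mul : ∀ a b, τ (a * b) = τ b * τ a
  τ_one : τ 1 = 1
  τ_x : ∀ i b, τ (x i b) = x i b
  τ_t : ∀ i, τ (t i) - t i ∈ polyCliff F x c
  g_τ : ∀ a, g (τ a) = -g a

variable {δ : A →ₐ[F] A} {τ : A →ₗ[F] A}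

theorem τ_xWord (hR : HeckeCliffordRel F x c t) (hg : IsAntiTrace x c t δ τ g)
    (xs : List (ℕ × Bool)) : τ (xWord x xs) = xWord x xs := by
  induction xs with
  | nil => exact hg.τ_one
  | cons p xs ih =>
    have : Commute (x p.1 p.2) (xWord x xs) := commute_xWord fun p' _ => hR.x_comm _ _ _ _
    rw [xWord_cons, hg.τ_mul, ih, hg.τ_x, this.eq]

theorem τ_word (hR : HeckeCliffordRel F x c t) (hg : IsAntiTrace x c t δ τ g)
    (w : List ℕ) : τ (word t w) - word t w.reverse ∈ lower F x c t w.length := by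
  induction w with
  | nil => simp [hg.τ_one]
  | cons a w ih =>
    obtain ⟨p, hp, e⟩ := hR.word_mul w.reverse (hg.τ_t a)
    rw [List.length_reverse] at e
    have h1 : (τ (word t w) - word t w.reverse) * word t [a] ∈ lower F x c t (w.length + 1) :=
      lower_mul_word ih [a]
    have h2 := lower_mono (Nat.le_succ _) (hR.lower_mul (hg.τ_t a) ih)
    have h3 := lower_mono (Nat.le_succ _) e
    have h4 : p * word t w.reverse ∈ lower F x c t (w.length + 1) := mem_lower hp (by simp)
    rw [word_cons, hg.τ_mul, List.reverse_cons, word_append, List.length_cons]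
    convert add_mem (add_mem h1 h2) (add_mem h3 h4) using 1
    simp only [word_cons, word_nil, mul_one]
    noncomm_ring

theorem δ_monomial (hg : IsAntiTrace x c t δ τ g) (xs : List (ℕ × Bool)) (cs w : List ℕ) :
    δ (xWord x xs * word c cs * word t w) =
      (-1) ^ cs.length * (xWord x xs * word c cs * word t w) := by
  have h1 : δ (xWord x xs) = xWord x xs := by
    induction xs with
    | nil => simp
    | cons p xs ih => simp [ih, hg.δ_x]
  have h2 : δ (word t w) = word t w := by
    induction w with
    | nil => simp
    | cons p xs ih => simp [ih, hg.δ_t]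
  have h3 : δ (word c cs) = (-1) ^ cs.length * word c cs := by
    induction cs with
    | nil => simp
    | cons a cs ih =>
      rw [word_cons, map_mul, ih, hg.δ_c, List.length_cons, pow_succ, ← mul_assoc, ← mul_assoc,
        neg_mul, ← ((Commute.neg_one_left (c a)).pow_left _).eq]
      noncomm_ring
  rw [map_mul, map_mul, h1, h2, h3, ← mul_assoc (xWord x xs),
    ← ((Commute.neg_one_left (xWord x xs)).pow_left _).eq]
  simp only [mul_assoc]

theorem c_mul_word_c (hR : HeckeCliffordRel F x c t) (a : ℕ) (cs : List ℕ) (h : a ∉ cs) :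
    c a * word c cs = (-1) ^ cs.length * (word c cs * c a) := by
  induction cs with
  | nil => simp
  | cons b cs ih =>
    rw [List.mem_cons, not_or] at h
    rw [word_cons, ← mul_assoc, hR.c_anti a b h.1, neg_mul, mul_assoc, ih h.2, ← mul_assoc,
      ← ((Commute.neg_one_left (c b)).pow_left _).eq, List.length_cons, pow_succ]
    noncomm_ring

/-- A trace vanishes on a product of two anticommuting odd pieces. -/
theorem trace_split (hR : HeckeCliffordRel F x c t) (hg : IsAntiTrace x c t δ τ g)
    {a : ℕ} {xs : List (ℕ × Bool)} {cs w : List ℕ} (hw : w.Pairwise (· < ·))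
    (haw : ∀ j ∈ w, a ≠ j + 1) (hcs : ∀ i ∈ cs, i < a) (hodd : Odd cs.length) :
    g (xWord x xs * word c (cs ++ [a]) * word t w) = 0 := by
  set x₁ := xs.filter fun p => p.1 < a with hx₁
  set x₂ := xs.filter fun p => !decide (p.1 < a) with hx₂
  set w₁ := w.filter fun j => j < a with hw₁
  set w₂ := w.filter fun j => !decide (j < a) with hw₂
  have m₁ : ∀ p ∈ x₁, p.1 < a := fun p hp => by simpa using (List.mem_filter.1 hp).2
  have m₂ : ∀ p ∈ x₂, a ≤ p.1 := fun p hp => by simpa using (List.mem_filter.1 hp).2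
  have n₁ : ∀ j ∈ w₁, j + 1 < a := fun j hj => by
    have h1 : j < a := by simpa using (List.mem_filter.1 hj).2
    have := haw j (List.mem_filter.1 hj).1
    omega
  have n₂ : ∀ j ∈ w₂, a ≤ j := fun j hj => by simpa using (List.mem_filter.1 hj).2
  have ex : xWord x xs = xWord x x₁ * xWord x x₂ := by
    rw [← xWord_append]
    exact hR.xWord_perm (List.filter_append_perm _ xs).symm
  have hT : Commute (word t w₁) (word t w₂) := commute_word fun i hi =>
    (commute_word fun j hj => (hR.t_far j i (by have := n₁ j hj; have := n₂ i hi; omega)).symm).symm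
  have ew : word t w = word t w₁ * word t w₂ := by
    have hsort : w₁ ++ w₂ = w := by
      refine List.Perm.eq_of_pairwise' (r := (· < ·)) ?_ hw (List.filter_append_perm _ w)
      refine List.pairwise_append.2 ⟨hw.filter _, hw.filter _, fun i hi j hj => ?_⟩
      have := n₁ i hi
      have := n₂ j hj
      omega
    rw [← word_append, hsort]
  have k1 : Commute (xWord x x₂) (word c cs) := commute_word fun i hi =>
    (commute_xWord fun p hp => hR.c_x_far i p.1 p.2
      (by have := hcs i hi; have := m₂ p hp; omega)).symm
  have k2 : Commute (c a) (xWord x x₁) := commute_xWord fun p hp =>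
    hR.c_x_far a p.1 p.2 (by have := m₁ p hp; omega)
  have k3 : Commute (word t w₁) (xWord x x₂ * c a) := by
    refine Commute.mul_right (commute_xWord fun p hp => (commute_word fun i hi => ?_).symm)
      (commute_word fun i hi => ?_).symm
    · exact (hR.t_x_far i p.1 p.2 (by have := n₁ i hi; have := m₂ p hp; omega)
        (by have := n₁ i hi; have := m₂ p hp; omega)).symm
    · exact (hR.t_c_far i a (by have := n₁ i hi; omega) (by have := n₁ i hi; omega)).symm
  have k4 : Commute (word t w₂) (xWord x x₁ * word c cs) := by
    refine Commute.mul_right (commute_xWord fun p hp => (commute_word fun i hi => ?_).symm)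
      (commute_word fun j hj => (commute_word fun i hi => ?_).symm)
    · exact (hR.t_x_far i p.1 p.2 (by have := n₂ i hi; have := m₁ p hp; omega)
        (by have := n₂ i hi; have := m₁ p hp; omega)).symm
    · exact (hR.t_c_far i j (by have := n₂ i hi; have := hcs j hj; omega)
        (by have := n₂ i hi; have := hcs j hj; omega)).symm
  have k5 : Commute (xWord x x₁) (xWord x x₂) := commute_xWord fun p _ =>
    (commute_xWord fun p' _ => hR.x_comm _ _ _ _).symm
  have k6 : c a * word c cs = -(word c cs * c a) := by
    rw [hR.c_mul_word_c a cs fun h => (hcs a h).false, hodd.neg_one_pow, neg_one_mul]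
  have e1 : xWord x xs * word c (cs ++ [a]) * word t w =
      (xWord x x₁ * word c cs * word t w₁) * (xWord x x₂ * c a * word t w₂) := by
    calc _ = xWord x x₁ * (xWord x x₂ * word c cs) * c a * (word t w₁ * word t w₂) := by
          rw [ex, ew, word_append]; simp only [word_cons, word_nil, mul_one, mul_assoc]
      _ = xWord x x₁ * word c cs * ((xWord x x₂ * c a) * word t w₁) * word t w₂ := by
          rw [k1.eq]; simp only [mul_assoc]
      _ = _ := by rw [← k3.eq]; simp only [mul_assoc]
  have e2 : (xWord x x₂ * c a * word t w₂) * (xWord x x₁ * word c cs * word t w₁) =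
      -(xWord x xs * word c (cs ++ [a]) * word t w) := by
    calc _ = xWord x x₂ * c a * (word t w₂ * (xWord x x₁ * word c cs)) * word t w₁ := by
          simp only [mul_assoc]
      _ = xWord x x₂ * (c a * xWord x x₁) * word c cs * (word t w₂ * word t w₁) := by
          rw [k4.eq]; simp only [mul_assoc]
      _ = (xWord x x₂ * xWord x x₁) * (c a * word c cs) * (word t w₁ * word t w₂) := by
          rw [k2.eq, hT.eq]; simp only [mul_assoc]
      _ = _ := by
          rw [k6, ← k5.eq, ← ex, ← ew, word_append]
          simp only [word_cons, word_nil, mul_one, mul_neg, neg_mul, mul_assoc]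
  refine hg.two _ ?_
  conv_lhs => rw [e1, hg.comm, e2, map_neg]

variable {w : List ℕ}

theorem trace_shift (hR : HeckeCliffordRel F x c t) (hg : IsAntiTrace x c t δ τ g)
    (hw : w.Pairwise (· < ·)) (hlow : ∀ y ∈ lower F x c t w.length, g y = 0)
    {j : ℕ} (hj : j ∈ w) {r r' p : A} (hp : p ∈ polyCliff F x c)
    (hr : ∀ i, j < i → Commute r (t i)) (hr' : ∀ i, i < j → Commute r' (t i))
    (e : t j * r - r' * t j ∈ polyCliff F x c) :
    g (p * r' * word t w) = g (r * p * word t w) := by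
  obtain ⟨u, v, rfl⟩ := List.append_of_mem hj
  obtain ⟨_, hv, huv⟩ := List.pairwise_append.1 hw
  have h := hR.word_mul_letter (u := u) (v := v) (fun i hi => huv i hi j (by simp))
    (List.pairwise_cons.1 hv).1 hr hr' e
  have h' := hlow _ (mul_mem_lower hp h)
  rw [mul_sub, map_sub, sub_eq_zero] at h'
  rw [mul_assoc, ← h', mul_assoc, ← mul_assoc, hg.comm]

theorem xWord_mem (xs : List (ℕ × Bool)) : xWord x xs ∈ polyCliff F x c := by
  induction xs with
  | nil => exact one_mem _
  | cons p xs ih => rw [xWord_cons]; exact mul_mem (x_mem F _ _) ih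

theorem word_c_mem (cs : List ℕ) : word c cs ∈ polyCliff F x c := by
  induction cs with
  | nil => exact one_mem _
  | cons p xs ih => rw [word_cons]; exact mul_mem (c_mem F _) ih

theorem trace_xWord (hR : HeckeCliffordRel F x c t) (hg : IsAntiTrace x c t δ τ g)
    (hw : w.Pairwise (· < ·)) (hlow : ∀ y ∈ lower F x c t w.length, g y = 0)
    {xs : List (ℕ × Bool)} (hx : ∀ p ∈ xs, ∀ j ∈ w, p.1 ≠ j + 1) :
    g (xWord x xs * word t w) = 0 := by
  refine hg.two _ ?_
  rw [← hg.g_τ, hg.τ_mul, hR.τ_xWord hg, hg.comm (τ _) (xWord x xs)]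
  have h := hlow _ (mul_mem_lower (xWord_mem xs) (hR.τ_word hg w))
  rw [mul_sub, map_sub, sub_eq_zero] at h
  rw [h]
  refine hR.trace_reverse hg.comm w _ hw fun i hi j hj hij => ?_
  refine (commute_xWord fun p hp => ?_).symm
  exact hR.t_x_far i p.1 p.2 (hij ▸ hx p hp j hj) (hx p hp i hi)

theorem trace_monomial (hR : HeckeCliffordRel F x c t) (hg : IsAntiTrace x c t δ τ g)
    (hw : w.Pairwise (· < ·)) (hlow : ∀ y ∈ lower F x c t w.length, g y = 0) (N : ℕ) :
    ∀ (xs : List (ℕ × Bool)) (cs : List ℕ), (xs.map Prod.fst).sum + cs.sum + cs.length = N →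
      g (xWord x xs * word c cs * word t w) = 0 := by
  induction N using Nat.strong_induction_on with
  | _ N ih =>
  intro xs cs hN
  have hperm : ∀ {cs' : List ℕ}, cs.Perm cs' →
      g (xWord x xs * word c cs' * word t w) = 0 →
      g (xWord x xs * word c cs * word t w) = 0 := by
    intro cs' h h0
    rcases hR.word_perm h with e | e <;> simp [e, h0]
  by_cases hA : ∃ a ∈ cs, ∃ j ∈ w, a = j + 1
  · obtain ⟨_, ha, j, hj, rfl⟩ := hA
    have hpm := List.perm_cons_erase ha
    refine hperm (hpm.trans (List.perm_append_singleton _ _).symm) ?_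
    rw [word_append, word_cons, word_nil, mul_one, ← mul_assoc,
      hR.trace_shift hg hw hlow hj (mul_mem (xWord_mem _) (word_c_mem _)) (r := c j)
      (fun i hi => (hR.t_c_far i j (by omega) (by omega)).symm)
      (fun i hi => (hR.t_c_far i (j + 1) (by omega) (by omega)).symm) (hR.t_c_lo j), ← mul_assoc]
    obtain ⟨xs', h1, h2⟩ := hR.c_mul_xWord j xs
    rw [h2, mul_assoc (xWord x xs'), ← word_cons]
    have hs := hpm.sum_eq
    have hl := hpm.length_eq
    simp only [List.sum_cons, List.length_cons] at hs hl
    exact ih _ (by rw [← hN, h1]; simp only [List.sum_cons, List.length_cons]; omega) _ _ rfl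
  by_cases hB : ∃ p ∈ xs, ∃ j ∈ w, p.1 = j + 1
  · obtain ⟨⟨_, b⟩, hp, j, hj, rfl⟩ := hB
    have hpm := List.perm_cons_erase hp
    obtain ⟨b', hb'⟩ := hR.x_mul_word_c (j + 1) cs b
    rw [hR.xWord_perm (hpm.trans (List.perm_append_singleton _ _).symm), xWord_append, xWord_cons,
      xWord_nil, mul_one, mul_assoc (xWord x _), hb', ← mul_assoc,
      hR.trace_shift hg hw hlow hj (mul_mem (xWord_mem _) (word_c_mem _)) (r := x j b')
      (fun i hi => (hR.t_x_far i j b' (by omega) (by omega)).symm)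
      (fun i hi => (hR.t_x_far i (j + 1) b' (by omega) (by omega)).symm) (hR.t_x_lo j b'),
      ← mul_assoc, ← xWord_cons x (j, b')]
    have hs := (hpm.map Prod.fst).sum_eq
    simp only [List.map_cons, List.sum_cons] at hs
    exact ih _ (by rw [← hN]; simp only [List.map_cons, List.sum_cons]; omega) _ _ rfl
  by_cases hC : cs.Nodup
  · push Not at hA hB
    rcases Nat.even_or_odd cs.length with heven | hodd
    · rcases cs.eq_nil_or_concat with rfl | hne
      · rw [word_nil, mul_one]
        exact hR.trace_xWord hg hw hlow hB
      · have hne' : cs ≠ [] := by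
          obtain ⟨l, b, rfl⟩ := hne
          simp
        obtain ⟨a, ha, hmax⟩ : ∃ a ∈ cs, ∀ b ∈ cs, b ≤ a :=
          ⟨cs.max hne', List.max_mem hne', fun b hb => List.le_max_of_mem hb⟩
        have hpm := List.perm_cons_erase ha
        refine hperm (hpm.trans (List.perm_append_singleton _ _).symm) ?_
        refine hR.trace_split hg hw (hA a ha) (fun i hi => ?_) ?_
        · have h1 := hmax i (List.mem_of_mem_erase hi)
          have h2 : i ≠ a := fun h => hC.not_mem_erase (h ▸ hi)
          omega
        · have hl := hpm.length_eq
          rw [List.length_cons] at hl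
          rw [hl] at heven
          exact (Nat.even_add_one.1 heven) |> Nat.not_even_iff_odd.1
    · refine hg.two _ ?_
      conv_lhs => rw [← hg.g_δ, δ_monomial hg, hodd.neg_one_pow, neg_one_mul, map_neg]
  · obtain ⟨a, ha⟩ : ∃ a, a ∈ cs ∧ a ∈ cs.erase a := by
      by_contra! h
      refine hC (List.nodup_iff_count_le_one.2 fun a => ?_)
      by_cases hmem : a ∈ cs
      · have := List.count_eq_zero_of_not_mem (h a hmem)
        rw [List.count_erase_self] at this
        omega
      · simp [List.count_eq_zero_of_not_mem hmem]
    have hpm := (List.perm_cons_erase ha.1).trans ((List.perm_cons_erase ha.2).cons a)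
    refine hperm hpm ?_
    obtain ⟨e, he⟩ := hR.c_sq a
    have hs := hpm.sum_eq
    have hl := hpm.length_eq
    simp only [List.sum_cons, List.length_cons] at hs hl
    rw [word_cons, word_cons, ← mul_assoc (c a), he, ← Algebra.smul_def, mul_smul_comm,
      smul_mul_assoc, map_smul, ih _ _ _ _ rfl, smul_zero]
    omega

/-- An anti-invariant trace vanishes on all elements `p * t_w`. -/
theorem trace_eq_zero (hR : HeckeCliffordRel F x c t) (hg : IsAntiTrace x c t δ τ g) (k : ℕ) :
    ∀ w : List ℕ, w.length = k → ∀ p ∈ polyCliff F x c, g (p * word t w) = 0 := by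
  induction k using Nat.strong_induction_on with
  | _ k ih =>
  have hlow : ∀ y ∈ lower F x c t k, g y = 0 := fun y hy =>
    map_lower g ⊥ (fun p hp w hw => ih _ hw w rfl p hp) hy
  refine CyclicBraidInvariant.all
    (S := fun w => w.length = k → ∀ p ∈ polyCliff F x c, g (p * word t w) = 0) ?_
  constructor
  · intro u v a b hab
    have hc : word t (u ++ a :: b :: v) = word t (u ++ b :: a :: v) := by
      simp only [word_append, word_cons, ← mul_assoc (t a), ← mul_assoc (t b)]
      rw [(hR.t_far a b hab).eq]
    simp [hc]
  · intro u v a h hk p hp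
    have hc : word t (u ++ (a + 1) :: a :: (a + 1) :: v) =
        word t (u ++ a :: (a + 1) :: a :: v) := by
      have := hR.t_braid a
      simp only [word_append, word_cons]
      simp only [← mul_assoc (t a), ← mul_assoc (t (a + 1))]
      rw [this]
    rw [hc]
    exact h (by simpa using hk) p hp
  · intro u v a hk p hp
    obtain ⟨d, e, hde⟩ := hR.t_sq a
    have hc : word t (u ++ a :: a :: v) = d • word t (u ++ a :: v) + e • word t (u ++ v) := by
      simp only [word_append, word_cons, ← mul_assoc (t a)]
      rw [hde, ← Algebra.smul_def, Algebra.algebraMap_eq_smul_one]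
      simp only [add_mul, mul_add, smul_mul_assoc, mul_smul_comm, one_mul]
    have hk' : u.length + (v.length + 2) = k := by simpa using hk
    rw [hc, mul_add, mul_smul_comm, mul_smul_comm, map_add, map_smul, map_smul,
      ih _ (by simp; omega) _ rfl p hp, ih _ (by simp; omega) _ rfl p hp]
    simp
  · intro u a h hk p hp
    have hk' : u.length + 1 = k := by simpa using hk
    obtain ⟨p', hp', e⟩ := hR.word_mul u hp
    have h1 := hlow _ (by
      have := lower_mul_word e [a]
      simpa only [List.length_singleton, hk'] using this)
    rw [sub_mul, map_sub, sub_eq_zero] at h1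
    rw [word_cons, ← mul_assoc, hg.comm, ← mul_assoc]
    simp only [word_cons, word_nil, mul_one] at h1
    rw [h1, mul_assoc]
    simpa using h (by simpa using hk) p' hp'
  · intro w hw hk p hp
    refine hR.polyCliff_induction (LinearMap.ker (g ∘ₗ LinearMap.mulRight F (word t w)))
      (fun xs cs => ?_) hp
    exact hR.trace_monomial hg hw (hk ▸ hlow) _ xs cs rfl

end Trace

end HeckeCliffordRel

section CrossRelations

variable {F A : Type*} [CommRing F] [Ring A] [Algebra F A] {ξ : F} {t c c' x x' y y' : A}

theorem hecke_mul_clifford_hi (htt : t * t = ξ • t + 1) (htc : t * c = c' * t) :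
    t * c' - c * t = ξ • (c' - c) := by
  have hinv : t * (t - ξ • 1) = 1 := by
    rw [mul_sub, htt, mul_smul_comm, mul_one, add_sub_cancel_left]
  calc t * c' - c * t = (t * (c' * t)) * (t - ξ • 1) - c * t := by
        rw [mul_assoc, mul_assoc, hinv, mul_one]
    _ = (t * t * c) * (t - ξ • 1) - c * t := by rw [← htc, mul_assoc t t c]
    _ = ξ • (t * c * t) - (ξ * ξ) • (t * c) - ξ • c := by
        rw [htt]
        simp only [add_mul, mul_sub, smul_mul_assoc, mul_smul_comm, mul_one, one_mul, smul_add,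
          smul_smul]
        abel
    _ = ξ • (c' * (t * t)) - (ξ * ξ) • (c' * t) - ξ • c := by rw [htc, mul_assoc]
    _ = ξ • (c' - c) := by
        rw [htt]
        simp only [mul_add, mul_smul_comm, mul_one, smul_add, smul_smul, smul_sub]
        abel

theorem hecke_mul_poly_lo (htt : t * t = ξ • t + 1)
    (hcross : (t + ξ • (c * c')) * x * t = x') :
    t * x - x' * t = -(ξ • x') - ξ • (c * c' * x) := by
  have hinv : t * (t - ξ • 1) = 1 := by
    rw [mul_sub, htt, mul_smul_comm, mul_one, add_sub_cancel_left]
  have h : (t + ξ • (c * c')) * x = x' * (t - ξ • 1) := by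
    rw [← hcross, mul_assoc, hinv, mul_one]
  rw [add_mul, mul_sub, mul_smul_comm, mul_one, smul_mul_assoc] at h
  rw [eq_sub_of_add_eq h]
  abel

theorem hecke_mul_poly_hi (htt : t * t = ξ • t + 1) (htc : t * c = c' * t) (hc : c * c = 1)
    (hc' : c' * c' = 1) (hcc' : c * c' = -(c' * c)) (hcross : (t + ξ • (c * c')) * x * t = x') :
    t * x' - x * t = ξ • x' + ξ • (c' * c * x') := by
  have h1 : t * c' = c * t + ξ • (c' - c) := by
    rw [← hecke_mul_clifford_hi htt htc]; abel
  have h2 : t * x * t = x' - ξ • (c * c' * x * t) := by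
    rw [← hcross]; simp only [add_mul, smul_mul_assoc]; abel
  have h3 : c' * c * (c * c' * x * t) = x * t := by
    rw [show c' * c * (c * c' * x * t) = c' * (c * c) * c' * x * t by noncomm_ring, hc, mul_one,
      hc', one_mul]
  calc t * x' - x * t
      = t * t * x * t + ξ • (t * c * c' * x * t) - x * t := by
        rw [← hcross]; simp only [add_mul, mul_add, smul_mul_assoc, mul_smul_comm, mul_assoc]
    _ = ξ • (t * x * t) + ξ • (c' * (t * c') * x * t) := by
        rw [htt, htc]; simp only [add_mul, smul_mul_assoc, one_mul, mul_assoc]; abel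
    _ = ξ • (t * x * t) + ξ • (c' * c * (t * x * t)) + (ξ * ξ) • (c' * c' * x * t)
          - (ξ * ξ) • (c' * c * x * t) := by
        rw [h1]
        simp only [mul_add, add_mul, mul_sub, sub_mul, smul_mul_assoc, mul_smul_comm, mul_assoc,
          smul_add, smul_sub, smul_smul]
        abel
    _ = ξ • x' + ξ • (c' * c * x') := by
        rw [h2, mul_sub, mul_smul_comm, h3, hc', hcc']
        simp only [one_mul, neg_mul, smul_sub, smul_neg, smul_smul]
        abel

variable {S : Subalgebra F A}

theorem hecke_mul_poly_inv_lo (htc : t * c = c' * t) (hc : c * c = 1) (hc' : c' * c' = 1)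
    (hx : c * x = y * c) (hx' : c' * x' = y' * c') (hcS : c ∈ S) (hcS' : c' ∈ S)
    (h : t * x - x' * t ∈ S) : t * y - y' * t ∈ S := by
  have hy : y = c * x * c := by rw [hx, mul_assoc, hc, mul_one]
  have hy' : y' = c' * x' * c' := by rw [hx', mul_assoc, hc', mul_one]
  convert mul_mem (mul_mem hcS' h) hcS using 1
  calc t * y - y' * t = (t * c) * x * c - c' * x' * (c' * t) := by
        rw [hy, hy']; simp only [mul_assoc]
    _ = c' * (t * x - x' * t) * c := by
        rw [← htc]
        rw [show t * c * x * c - c' * x' * (t * c) = (t * c) * x * c - c' * x' * t * c by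
          simp only [mul_assoc], htc]
        noncomm_ring

theorem hecke_mul_poly_inv_hi (hc : c * c = 1) (hc' : c' * c' = 1)
    (hx : c * x = y * c) (hx' : c' * x' = y' * c') (hcS : c ∈ S) (hcS' : c' ∈ S)
    (hxS : x ∈ S) (hxS' : x' ∈ S)
    (htc' : t * c' - c * t ∈ S) (h : t * x' - x * t ∈ S) : t * y' - y * t ∈ S := by
  have hy : y = c * x * c := by rw [hx, mul_assoc, hc, mul_one]
  have hy' : y' = c' * x' * c' := by rw [hx', mul_assoc, hc', mul_one]
  rw [hy, hy']
  convert add_mem (add_mem (mul_mem (mul_mem htc' hxS') hcS') (mul_mem (mul_mem hcS h) hcS'))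
    (mul_mem (mul_mem hcS hxS) htc') using 1
  noncomm_ring

end CrossRelations

namespace HC

section Letters

variable (F : Type) [Field F] (q : F) (n : ℕ)

/-- The letters `X_k^{±1}`, indexed by all natural numbers and zero out of range. -/
noncomputable def polyLetter (k : ℕ) (b : Bool) : H F q n :=
  if h : k < n then (if b then X F q ⟨k, h⟩ else Xinv F q ⟨k, h⟩) else 0

/-- The letters `C_k`, indexed by all natural numbers and zero out of range. -/
noncomputable def cliffLetter (k : ℕ) : H F q n := if h : k < n then C F q ⟨k, h⟩ else 0

/-- The letters `T_k`, indexed by all natural numbers and zero out of range. -/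
noncomputable def heckeLetter (k : ℕ) : H F q n := if h : k < n - 1 then T F q ⟨k, h⟩ else 0

variable {F q n}

theorem rel {a b : FA F n} (h : Rel F q n a b) :
    RingQuot.mkAlgHom F (Rel F q n) a = RingQuot.mkAlgHom F (Rel F q n) b :=
  RingQuot.mkAlgHom_rel F h

theorem rel_commute {a b : FA F n} (h : Rel F q n (a * b) (b * a)) :
    Commute (RingQuot.mkAlgHom F (Rel F q n) a) (RingQuot.mkAlgHom F (Rel F q n) b) := by
  rw [Commute, SemiconjBy, ← map_mul, ← map_mul]
  exact rel h

theorem Xinv_mul_X (i : Fin n) : Xinv F q i * X F q i = 1 := by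
  simpa [X, Xinv] using rel (Rel.XinvX (q := q) i)

theorem X_mul_Xinv (i : Fin n) : X F q i * Xinv F q i = 1 := by
  simpa [X, Xinv] using rel (Rel.XXinv (q := q) i)

theorem X_commute_Xinv (i j : Fin n) : Commute (X F q i) (Xinv F q j) := by
  by_cases h : i = j
  · subst h
    rw [Commute, SemiconjBy, X_mul_Xinv, Xinv_mul_X]
  · exact rel_commute (Rel.XXi (q := q) i j h)

theorem polyLetter_commute (i : ℕ) (a : Bool) (j : ℕ) (b : Bool) :
    Commute (polyLetter F q n i a) (polyLetter F q n j b) := by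
  unfold polyLetter
  split_ifs with h1 ha h2 hb h2 hb
  any_goals exact Commute.zero_left _
  any_goals exact Commute.zero_right _
  · exact rel_commute (Rel.XX (q := q) ⟨i, h1⟩ ⟨j, h2⟩)
  · exact X_commute_Xinv _ _
  · exact (X_commute_Xinv _ _).symm
  · exact rel_commute (Rel.XiXi (q := q) ⟨i, h1⟩ ⟨j, h2⟩)

theorem C_mul_self (i : Fin n) : C F q i * C F q i = 1 := by
  simpa [C] using rel (Rel.CC (q := q) i)

theorem C_anticomm {i j : Fin n} (h : i ≠ j) : C F q i * C F q j = -(C F q j * C F q i) := by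
  simpa [C] using rel (Rel.Canti (q := q) i j h)

theorem C_mul_X (i : Fin n) : C F q i * X F q i = Xinv F q i * C F q i := by
  simpa [C, X, Xinv] using rel (Rel.CX (q := q) i)

theorem C_mul_Xinv (i : Fin n) : C F q i * Xinv F q i = X F q i * C F q i := by
  simpa [C, X, Xinv] using rel (Rel.CXi (q := q) i)

theorem T_mul_self (i : Fin (n - 1)) : T F q i * T F q i = (q - q⁻¹) • T F q i + 1 := by
  simpa only [T, map_mul, map_add, map_smul, map_one] using rel (Rel.Tquad (q := q) i)

theorem T_mul_C_lo (i : Fin (n - 1)) : T F q i * C F q (lo i) = C F q (hi i) * T F q i := by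
  simpa [T, C] using rel (Rel.TC (q := q) i)

theorem cross_rel (i : Fin (n - 1)) :
    (T F q i + (q - q⁻¹) • (C F q (lo i) * C F q (hi i))) * X F q (lo i) * T F q i =
      X F q (hi i) := by
  simpa only [T, C, X, map_mul, map_add, map_smul] using rel (Rel.cross (q := q) i)

theorem cliffLetter_mul_polyLetter (i : ℕ) (b : Bool) :
    cliffLetter F q n i * polyLetter F q n i b = polyLetter F q n i (!b) * cliffLetter F q n i := by
  unfold cliffLetter polyLetter
  by_cases h : i < n
  · cases b <;> simp [h, C_mul_X, C_mul_Xinv]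
  · simp [h]

theorem cliffLetter_commute (i j : ℕ) (b : Bool) (hij : i ≠ j) :
    Commute (cliffLetter F q n i) (polyLetter F q n j b) := by
  unfold cliffLetter polyLetter
  split_ifs with h1 h2 hb
  any_goals exact Commute.zero_left _
  any_goals exact Commute.zero_right _
  · exact rel_commute (Rel.CXo (q := q) ⟨i, h1⟩ ⟨j, h2⟩ (by simpa using hij))
  · exact rel_commute (Rel.CXio (q := q) ⟨i, h1⟩ ⟨j, h2⟩ (by simpa using hij))

theorem heckeLetter_commute_cliffLetter (i j : ℕ) (h1 : j ≠ i) (h2 : j ≠ i + 1) :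
    Commute (heckeLetter F q n i) (cliffLetter F q n j) := by
  unfold cliffLetter heckeLetter
  split_ifs with hi hj
  any_goals exact Commute.zero_left _
  any_goals exact Commute.zero_right _
  exact rel_commute (Rel.TCo (q := q) ⟨i, hi⟩ ⟨j, hj⟩ (by simpa [lo] using h1)
    (by simpa [HC.hi] using h2))

theorem heckeLetter_commute_polyLetter (i j : ℕ) (b : Bool) (h1 : j ≠ i) (h2 : j ≠ i + 1) :
    Commute (heckeLetter F q n i) (polyLetter F q n j b) := by
  unfold polyLetter heckeLetter
  split_ifs with hi hj
  any_goals exact Commute.zero_left _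
  any_goals exact Commute.zero_right _
  · exact rel_commute (Rel.TXo (q := q) ⟨i, hi⟩ ⟨j, hj⟩ (by simpa [lo] using h1)
      (by simpa [HC.hi] using h2))
  · exact rel_commute (Rel.TXio (q := q) ⟨i, hi⟩ ⟨j, hj⟩ (by simpa [lo] using h1)
      (by simpa [HC.hi] using h2))

theorem heckeLetter_braid (i : ℕ) :
    heckeLetter F q n i * heckeLetter F q n (i + 1) * heckeLetter F q n i =
      heckeLetter F q n (i + 1) * heckeLetter F q n i * heckeLetter F q n (i + 1) := by
  unfold heckeLetter
  split_ifs with h1 h2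
  any_goals simp
  simpa [T] using rel (Rel.Tbraid (q := q) ⟨i, h1⟩ ⟨i + 1, h2⟩ rfl)

theorem heckeLetter_commute (i j : ℕ) (h : i + 1 < j) :
    Commute (heckeLetter F q n i) (heckeLetter F q n j) := by
  unfold heckeLetter
  split_ifs with hi hj
  any_goals exact Commute.zero_left _
  any_goals exact Commute.zero_right _
  exact rel_commute (Rel.TTfar (q := q) ⟨i, hi⟩ ⟨j, hj⟩ h)

theorem heckeLetter_of_lt {i : ℕ} (h : i < n - 1) : heckeLetter F q n i = T F q ⟨i, h⟩ := dif_pos h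

theorem heckeLetter_of_not_lt {i : ℕ} (h : ¬ i < n - 1) : heckeLetter F q n i = 0 := dif_neg h

theorem cliffLetter_lo (i : Fin (n - 1)) : cliffLetter F q n i = C F q (lo i) :=
  dif_pos (lo i).isLt

theorem cliffLetter_hi (i : Fin (n - 1)) : cliffLetter F q n (i + 1) = C F q (hi i) :=
  dif_pos (hi i).isLt

theorem polyLetter_lo (i : Fin (n - 1)) (b : Bool) :
    polyLetter F q n i b = if b then X F q (lo i) else Xinv F q (lo i) := dif_pos (lo i).isLt

theorem polyLetter_hi (i : Fin (n - 1)) (b : Bool) :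
    polyLetter F q n (i + 1) b = if b then X F q (hi i) else Xinv F q (hi i) :=
  dif_pos (hi i).isLt

theorem C_lo_anticomm (i : Fin (n - 1)) :
    C F q (lo i) * C F q (hi i) = -(C F q (hi i) * C F q (lo i)) :=
  C_anticomm (by simp [lo, hi])

theorem C_mem_polyCliff (i : Fin n) :
    C F q i ∈ polyCliff F (polyLetter F q n) (cliffLetter F q n) := by
  have h := HeckeCliffordRel.c_mem (x := polyLetter F q n) (c := cliffLetter F q n) F i
  rwa [cliffLetter, dif_pos i.isLt] at h

theorem X_mem_polyCliff (i : Fin n) :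
    X F q i ∈ polyCliff F (polyLetter F q n) (cliffLetter F q n) := by
  have h := HeckeCliffordRel.x_mem (x := polyLetter F q n) (c := cliffLetter F q n) F i true
  rwa [polyLetter, dif_pos i.isLt, if_pos rfl] at h

theorem T_mul_C_hi_mem (i : Fin (n - 1)) :
    T F q i * C F q (hi i) - C F q (lo i) * T F q i ∈
      polyCliff F (polyLetter F q n) (cliffLetter F q n) := by
  rw [hecke_mul_clifford_hi (T_mul_self (F := F) (q := q) i) (T_mul_C_lo i)]
  exact Subalgebra.smul_mem _ (sub_mem (C_mem_polyCliff _) (C_mem_polyCliff _)) _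

theorem T_mul_X_lo_mem (i : Fin (n - 1)) :
    T F q i * X F q (lo i) - X F q (hi i) * T F q i ∈
      polyCliff F (polyLetter F q n) (cliffLetter F q n) := by
  rw [hecke_mul_poly_lo (T_mul_self (F := F) (q := q) i) (cross_rel (F := F) (q := q) i)]
  exact sub_mem (neg_mem (Subalgebra.smul_mem _ (X_mem_polyCliff _) _)) (Subalgebra.smul_mem _
    (mul_mem (mul_mem (C_mem_polyCliff _) (C_mem_polyCliff _)) (X_mem_polyCliff _)) _)

theorem T_mul_X_hi_mem (i : Fin (n - 1)) :
    T F q i * X F q (hi i) - X F q (lo i) * T F q i ∈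
      polyCliff F (polyLetter F q n) (cliffLetter F q n) := by
  rw [hecke_mul_poly_hi (T_mul_self (F := F) (q := q) i) (T_mul_C_lo i) (C_mul_self _)
    (C_mul_self _) (C_lo_anticomm i) (cross_rel (F := F) (q := q) i)]
  exact add_mem (Subalgebra.smul_mem _ (X_mem_polyCliff _) _) (Subalgebra.smul_mem _
    (mul_mem (mul_mem (C_mem_polyCliff _) (C_mem_polyCliff _)) (X_mem_polyCliff _)) _)

theorem T_mul_Xinv_lo_mem (i : Fin (n - 1)) :
    T F q i * Xinv F q (lo i) - Xinv F q (hi i) * T F q i ∈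
      polyCliff F (polyLetter F q n) (cliffLetter F q n) :=
  hecke_mul_poly_inv_lo (T_mul_C_lo i) (C_mul_self _) (C_mul_self _) (C_mul_X _) (C_mul_X _)
    (C_mem_polyCliff _) (C_mem_polyCliff _) (T_mul_X_lo_mem i)

theorem T_mul_Xinv_hi_mem (i : Fin (n - 1)) :
    T F q i * Xinv F q (hi i) - Xinv F q (lo i) * T F q i ∈
      polyCliff F (polyLetter F q n) (cliffLetter F q n) :=
  hecke_mul_poly_inv_hi (C_mul_self _) (C_mul_self _) (C_mul_X _) (C_mul_X _)
    (C_mem_polyCliff _) (C_mem_polyCliff _) (X_mem_polyCliff _) (X_mem_polyCliff _)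
    (T_mul_C_hi_mem i) (T_mul_X_hi_mem i)

variable (F q n)

theorem heckeCliffordRel :
    HeckeCliffordRel F (polyLetter F q n) (cliffLetter F q n) (heckeLetter F q n) where
  x_comm := polyLetter_commute
  c_sq i := by
    by_cases h : i < n
    · exact ⟨1, by simp [cliffLetter, h, C_mul_self]⟩
    · exact ⟨0, by simp [cliffLetter, h]⟩
  c_anti i j hij := by
    unfold cliffLetter
    split_ifs
    any_goals simp
    exact C_anticomm (by simpa using hij)
  c_x := cliffLetter_mul_polyLetter
  c_x_far := cliffLetter_commute
  t_sq i := by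
    by_cases h : i < n - 1
    · exact ⟨q - q⁻¹, 1, by
        rw [heckeLetter_of_lt h, T_mul_self, Algebra.smul_def, map_one]⟩
    · exact ⟨0, 0, by simp [heckeLetter, h]⟩
  t_braid := heckeLetter_braid
  t_far := heckeLetter_commute
  t_c_far := heckeLetter_commute_cliffLetter
  t_x_far := heckeLetter_commute_polyLetter
  t_c_lo i := by
    by_cases h : i < n - 1
    · lift i to Fin (n - 1) using h
      rw [heckeLetter_of_lt i.isLt, cliffLetter_lo, cliffLetter_hi, T_mul_C_lo, sub_self]
      exact zero_mem _
    · simp [heckeLetter_of_not_lt h, zero_mem]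
  t_c_hi i := by
    by_cases h : i < n - 1
    · lift i to Fin (n - 1) using h
      rw [heckeLetter_of_lt i.isLt, cliffLetter_lo, cliffLetter_hi]
      exact T_mul_C_hi_mem i
    · simp [heckeLetter_of_not_lt h, zero_mem]
  t_x_lo i b := by
    by_cases h : i < n - 1
    · lift i to Fin (n - 1) using h
      rw [heckeLetter_of_lt i.isLt, polyLetter_lo, polyLetter_hi]
      cases b
      · exact T_mul_Xinv_lo_mem i
      · exact T_mul_X_lo_mem i
    · simp [heckeLetter_of_not_lt h, zero_mem]
  t_x_hi i b := by
    by_cases h : i < n - 1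
    · lift i to Fin (n - 1) using h
      rw [heckeLetter_of_lt i.isLt, polyLetter_lo, polyLetter_hi]
      cases b
      · exact T_mul_Xinv_hi_mem i
      · exact T_mul_X_hi_mem i
    · simp [heckeLetter_of_not_lt h, zero_mem]

end Letters

end HC

namespace HC

section TraceInvariance

variable {F : Type} [Field F] {q : F} {n : ℕ}

theorem H_induction {P : H F q n → Prop} (scalar : ∀ r, P (algebraMap F _ r))
    (mem_X : ∀ i, P (X F q i)) (mem_Xinv : ∀ i, P (Xinv F q i)) (mem_C : ∀ i, P (C F q i))
    (mem_T : ∀ i, P (T F q i)) (mul : ∀ a b, P a → P b → P (a * b))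
    (add : ∀ a b, P a → P b → P (a + b)) (h : H F q n) : P h := by
  obtain ⟨a, rfl⟩ := RingQuot.mkAlgHom_surjective F (Rel F q n) h
  induction a using FreeAlgebra.induction with
  | grade0 r => rw [AlgHom.commutes]; exact scalar r
  | grade1 x =>
    cases x with
    | X i => exact mem_X i
    | Xinv i => exact mem_Xinv i
    | C i => exact mem_C i
    | T i => exact mem_T i
  | mul a b ha hb => rw [map_mul]; exact mul _ _ ha hb
  | add a b ha hb => rw [map_add]; exact add _ _ ha hb

theorem exists_mem_lower (h : H F q n) :
    ∀ k, ∀ y ∈ HeckeCliffordRel.lower F (polyLetter F q n) (cliffLetter F q n)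
      (heckeLetter F q n) k, ∃ l, h * y ∈ HeckeCliffordRel.lower F (polyLetter F q n)
        (cliffLetter F q n) (heckeLetter F q n) l := by
  induction h using H_induction with
  | scalar r =>
    exact fun k y hy => ⟨k, HeckeCliffordRel.mul_mem_lower (Subalgebra.algebraMap_mem _ r) hy⟩
  | mem_X i => exact fun k y hy => ⟨k, HeckeCliffordRel.mul_mem_lower (X_mem_polyCliff i) hy⟩
  | mem_Xinv i =>
    refine fun k y hy => ⟨k, HeckeCliffordRel.mul_mem_lower ?_ hy⟩
    have h := mul_mem (mul_mem (C_mem_polyCliff (F := F) (q := q) i) (X_mem_polyCliff i))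
      (C_mem_polyCliff i)
    rwa [C_mul_X, mul_assoc, C_mul_self, mul_one] at h
  | mem_C i => exact fun k y hy => ⟨k, HeckeCliffordRel.mul_mem_lower (C_mem_polyCliff i) hy⟩
  | mem_T i =>
    intro k y hy
    have h := (heckeCliffordRel F q n).t_mul_lower i hy
    rw [heckeLetter_of_lt i.isLt] at h
    exact ⟨_, h⟩
  | mul a b ha hb =>
    intro k y hy
    obtain ⟨l, hl⟩ := hb k y hy
    rw [mul_assoc]
    exact ha l _ hl
  | add a b ha hb =>
    intro k y hy
    obtain ⟨l, hl⟩ := ha k y hy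
    obtain ⟨l', hl'⟩ := hb k y hy
    refine ⟨max l l', ?_⟩
    rw [add_mul]
    exact add_mem (HeckeCliffordRel.lower_mono (le_max_left _ _) hl)
      (HeckeCliffordRel.lower_mono (le_max_right _ _) hl')

variable {δ : H F q n →ₐ[F] H F q n} {τ : H F q n →ₗ[F] H F q n}

theorem IsTauAntiAut.map_algebraMap (hτ : IsTauAntiAut F q τ) (r : F) :
    τ (algebraMap F _ r) = algebraMap F _ r := by
  rw [Algebra.algebraMap_eq_smul_one, map_smul, hτ.2.2.1]

theorem IsTauAntiAut.involutive (hτ : IsTauAntiAut F q τ) (h : H F q n) : τ (τ h) = h := by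
  have hscal := hτ.map_algebraMap
  obtain ⟨-, hmul, -, hT, hC, hX, hXinv⟩ := hτ
  induction h using H_induction with
  | scalar r => rw [hscal, hscal]
  | mem_X i => rw [hX, hX]
  | mem_Xinv i => rw [hXinv, hXinv]
  | mem_C i => rw [hC, hC]
  | mem_T i =>
    rw [hT, map_add, hT, map_smul, hmul, hC, hC, C_lo_anticomm, smul_neg]
    abel
  | mul a b ha hb => rw [hmul, hmul, ha, hb]
  | add a b ha hb => rw [map_add, map_add, ha, hb]

theorem IsGradingAut.comm_tau (hδ : IsGradingAut F q δ) (hτ : IsTauAntiAut F q τ) (h : H F q n) :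
    δ (τ h) = τ (δ h) := by
  have hscal := hτ.map_algebraMap
  obtain ⟨-, hmul, -, hT, hC, hX, hXinv⟩ := hτ
  obtain ⟨dX, dXinv, dC, dT⟩ := hδ
  induction h using H_induction with
  | scalar r => rw [hscal, AlgHom.commutes, hscal]
  | mem_X i => rw [hX, dX, hX]
  | mem_Xinv i => rw [hXinv, dXinv, hXinv]
  | mem_C i => rw [hC, dC, map_neg, hC]
  | mem_T i =>
    have h : -C F q (lo i) * -C F q (hi i) = C F q (lo i) * C F q (hi i) :=
      neg_mul_neg (C F q (lo i)) (C F q (hi i))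
    rw [dT, hT, map_add, map_smul, map_mul, dT, dC, dC, h]
  | mul a b ha hb => rw [hmul, map_mul, map_mul, hmul, ha, hb]
  | add a b ha hb => rw [map_add, map_add, map_add, map_add, ha, hb]

/-- The character of a finite-dimensional supermodule is invariant under `τ`. -/
theorem trace_tau (h2 : (2 : F) ≠ 0) (hδ : IsGradingAut F q δ) (hτ : IsTauAntiAut F q τ)
    {M : Type} [AddCommGroup M] [Module F M]
    (ρ : H F q n →ₐ[F] Module.End F M) (JM : Module.End F M) (hJ2 : JM * JM = 1)
    (hJρ : ∀ h : H F q n, JM * ρ h = ρ (δ h) * JM) (h : H F q n) :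
    LinearMap.trace F M (ρ (τ h)) = LinearMap.trace F M (ρ h) := by
  have hinv := hτ.involutive
  have hcomm := hδ.comm_tau hτ
  obtain ⟨-, hmul, hone, hT, hC, hX, hXinv⟩ := hτ
  obtain ⟨dX, dXinv, dC, dT⟩ := hδ
  set f : H F q n →ₗ[F] F := LinearMap.trace F M ∘ₗ ρ.toLinearMap with hf
  have hfmul : ∀ a b, f (a * b) = f (b * a) := fun a b => by
    simp only [hf, LinearMap.comp_apply, AlgHom.toLinearMap_apply, map_mul]
    exact LinearMap.trace_mul_comm F _ _
  have hfδ : ∀ a, f (δ a) = f a := fun a => by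
    have : ρ (δ a) = JM * ρ a * JM := by rw [hJρ, mul_assoc, hJ2, mul_one]
    simp only [hf, LinearMap.comp_apply, AlgHom.toLinearMap_apply, this]
    rw [LinearMap.trace_mul_comm, ← mul_assoc, hJ2, one_mul]
  have hg : HeckeCliffordRel.IsAntiTrace (polyLetter F q n) (cliffLetter F q n)
      (heckeLetter F q n) δ τ (f - f ∘ₗ τ) :=
    { two := fun r hr => by
        have : 2 * r = 0 := by linear_combination hr
        exact (mul_eq_zero.1 this).resolve_left h2
      comm := fun a b => by simp [hmul, hfmul a b, hfmul (τ a) (τ b)]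
      δ_x := fun i b => by
        unfold polyLetter
        split_ifs <;> simp [dX, dXinv]
      δ_c := fun i => by
        unfold cliffLetter
        split_ifs <;> simp [dC]
      δ_t := fun i => by
        unfold heckeLetter
        split_ifs <;> simp [dT]
      g_δ := fun a => by simp [hfδ, ← hcomm]
      τ_mul := hmul
      τ_one := hone
      τ_x := fun i b => by
        unfold polyLetter
        split_ifs <;> simp [hX, hXinv]
      τ_t := fun i => by
        unfold heckeLetter
        split_ifs
        · rw [hT, add_sub_cancel_left]
          exact Subalgebra.smul_mem _ (mul_mem (C_mem_polyCliff _) (C_mem_polyCliff _)) _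
        · simp [zero_mem]
      g_τ := fun a => by simp [hinv] }
  have hone_mem : (1 : H F q n) ∈ HeckeCliffordRel.lower F (polyLetter F q n) (cliffLetter F q n)
      (heckeLetter F q n) 1 := by
    simpa using HeckeCliffordRel.mem_lower (t := heckeLetter F q n)
      (one_mem (polyCliff F (polyLetter F q n) (cliffLetter F q n))) (w := []) (k := 1) (by simp)
  obtain ⟨l, hl⟩ := exists_mem_lower h 1 1 hone_mem
  have hzero := HeckeCliffordRel.map_lower (f - f ∘ₗ τ) ⊥ (fun p hp w _ =>
    (heckeCliffordRel F q n).trace_eq_zero hg _ w rfl p hp) hl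
  simp only [mul_one, LinearMap.sub_apply, LinearMap.comp_apply, Submodule.mem_bot] at hzero
  exact (sub_eq_zero.1 hzero).symm

end TraceInvariance

end HC

section GradedSimple

open TensorProduct

variable {F A M N : Type*} [Field F] [Ring A] [Algebra F A]
  [AddCommGroup M] [Module F M] [Module A M]
  [AddCommGroup N] [Module F N] [Module A N]

/-- A module with a compatible involution `J` and without proper nonzero `J`-stable submodules. -/
structure IsGradedSimple (δ : A →ₐ[F] A) (J : M →ₗ[F] M) : Prop where
  sq : ∀ m, J (J m) = m
  map_smul : ∀ (a : A) (m : M), J (a • m) = δ a • J m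
  eq_bot_or_top : ∀ V : Submodule A M, (∀ m ∈ V, J m ∈ V) → V = ⊥ ∨ V = ⊤

namespace IsGradedSimple

variable {δ : A →ₐ[F] A} {J : M →ₗ[F] M} {K : N →ₗ[F] N}

theorem δ_δ_smul (hM : IsGradedSimple δ J) (a : A) (m : M) : δ (δ a) • m = a • m := by
  rw [← hM.sq m, ← hM.map_smul, ← hM.map_smul, hM.sq, hM.sq]

/-- The image of a submodule under the involution. -/
def flip (hM : IsGradedSimple δ J) (V : Submodule A M) : Submodule A M where
  carrier := {m | J m ∈ V}
  add_mem' ha hb := by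
    simp only [Set.mem_ofPred_eq, map_add] at *
    exact add_mem ha hb
  zero_mem' := by simp
  smul_mem' a m hm := by
    simp only [Set.mem_ofPred_eq, hM.map_smul] at *
    exact V.smul_mem _ hm

theorem mem_flip (hM : IsGradedSimple δ J) {V : Submodule A M} {m : M} :
    m ∈ hM.flip V ↔ J m ∈ V := Iff.rfl

theorem isSemisimpleModule (hM : IsGradedSimple δ J) : IsSemisimpleModule A M := by
  refine (isSemisimpleModule_iff A M).2 ⟨fun V => ?_⟩
  have hinf := hM.eq_bot_or_top (V ⊓ hM.flip V) fun m hm =>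
    ⟨hm.2, hM.mem_flip.2 ((hM.sq m).symm ▸ hm.1)⟩
  have hsup := hM.eq_bot_or_top (V ⊔ hM.flip V) fun m hm => by
    obtain ⟨v, hv, w, hw, rfl⟩ := Submodule.mem_sup.1 hm
    rw [map_add]
    refine add_mem (Submodule.mem_sup_right ?_) (Submodule.mem_sup_left hw)
    rwa [mem_flip, hM.sq]
  rcases hinf with hinf | hinf
  · rcases hsup with hsup | hsup
    · exact ⟨⊤, by rw [(sup_eq_bot_iff.1 hsup).1]; exact isCompl_bot_top⟩
    · exact ⟨hM.flip V, disjoint_iff.2 hinf, codisjoint_iff.2 hsup⟩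
  · exact ⟨⊥, by rw [(inf_eq_top_iff.1 hinf).1]; exact isCompl_top_bot⟩

/-- A nonzero homogeneous map between graded simple modules is bijective. -/
theorem bijective_of_homogeneous (hM : IsGradedSimple δ J) (hN : IsGradedSimple δ K)
    {φ : M →ₗ[A] N} (hφ : φ ≠ 0) {ε : ℤˣ} (h : ∀ m, φ (J m) = ε • K (φ m)) :
    Function.Bijective φ := by
  constructor
  · rw [← LinearMap.ker_eq_bot]
    refine (hM.eq_bot_or_top (LinearMap.ker φ) fun m hm => ?_).resolve_right
      fun h => hφ (LinearMap.ker_eq_top.1 h)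
    rw [LinearMap.mem_ker] at hm ⊢
    rw [h, hm, map_zero, smul_zero]
  · rw [← LinearMap.range_eq_top]
    refine (hN.eq_bot_or_top (LinearMap.range φ) ?_).resolve_left
      fun h => hφ (LinearMap.range_eq_bot.1 h)
    rintro _ ⟨m, rfl⟩
    refine ⟨ε • J m, ?_⟩
    rw [Units.smul_def, map_zsmul, ← Units.smul_def, h, smul_smul, ← _root_.sq, Int.units_sq, one_smul]

/-- Conjugation of a linear map by the involutions. -/
def conj (hM : IsGradedSimple δ J) (hN : IsGradedSimple δ K) (φ : M →ₗ[A] N) : M →ₗ[A] N where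
  toFun m := K (φ (J m))
  map_add' := by simp
  map_smul' a m := by simp [hM.map_smul, hN.map_smul, hN.δ_δ_smul]

theorem conj_apply (hM : IsGradedSimple δ J) (hN : IsGradedSimple δ K) (φ : M →ₗ[A] N) (m : M) :
    hM.conj hN φ m = K (φ (J m)) := rfl

theorem add_conj_apply (hM : IsGradedSimple δ J) (hN : IsGradedSimple δ K) (φ : M →ₗ[A] N)
    (m : M) : (φ + hM.conj hN φ) (J m) = K ((φ + hM.conj hN φ) m) := by
  simp [conj_apply, hM.sq, hN.sq, add_comm]

theorem sub_conj_apply (hM : IsGradedSimple δ J) (hN : IsGradedSimple δ K) (φ : M →ₗ[A] N)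
    (m : M) : (φ - hM.conj hN φ) (J m) = -K ((φ - hM.conj hN φ) m) := by
  simp [conj_apply, hM.sq, hN.sq]

theorem exists_homogeneous_equiv (h2 : (2 : F) ≠ 0) (hM : IsGradedSimple δ J)
    (hN : IsGradedSimple δ K) {φ : M →ₗ[A] N} (hφ : φ ≠ 0) :
    ∃ ψ : M ≃ₗ[A] N, (∀ m, ψ (J m) = K (ψ m)) ∨ ∀ m, ψ (J m) = -K (ψ m) := by
  by_cases h : φ + hM.conj hN φ = 0
  · have h' : φ - hM.conj hN φ ≠ 0 := by
      intro h'
      refine hφ (LinearMap.ext fun m => ?_)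
      have e : (2 : F) • φ m = (φ + hM.conj hN φ) m + (φ - hM.conj hN φ) m := by
        simp only [LinearMap.add_apply, LinearMap.sub_apply, two_smul]
        abel
      rw [h, h', LinearMap.zero_apply, add_zero] at e
      exact (smul_eq_zero.1 e).resolve_left h2
    exact ⟨LinearEquiv.ofBijective _ (hM.bijective_of_homogeneous hN h' (ε := -1) fun m => by
      rw [sub_conj_apply]; simp), Or.inr (hM.sub_conj_apply hN φ)⟩
  · exact ⟨LinearEquiv.ofBijective _ (hM.bijective_of_homogeneous hN h (ε := 1) fun m => by
      rw [add_conj_apply]; simp), Or.inl (hM.add_conj_apply hN φ)⟩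

variable [IsScalarTower F A M] [FiniteDimensional F M]

/-- Even endomorphisms of a graded simple module are scalars. -/
theorem exists_eq_smul [IsAlgClosed F] [Nontrivial M] (hM : IsGradedSimple δ J)
    (d : Module.End A M) (hd : ∀ m, d (J m) = J (d m)) : ∃ r : F, ∀ m, d m = r • m := by
  obtain ⟨r, hr⟩ := Module.End.exists_eigenvalue (d.restrictScalars F)
  obtain ⟨v, hv⟩ := hr.exists_hasEigenvector
  let V : Submodule A M :=
    { carrier := {m | d m = r • m}
      add_mem' := fun {a b} ha hb => by
        simp only [Set.mem_ofPred_eq, map_add, smul_add] at *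
        rw [ha, hb]
      zero_mem' := by simp
      smul_mem' := fun a m hm => by
        simp only [Set.mem_ofPred_eq, _root_.map_smul] at *
        rw [hm, smul_comm] }
  have hV : ∀ m, m ∈ V ↔ d m = r • m := fun m => Iff.rfl
  refine ⟨r, fun m => (hV m).1 ?_⟩
  rw [(hM.eq_bot_or_top V fun m hm => ?_).resolve_left fun h => ?_]
  · trivial
  · rw [hV] at hm ⊢
    rw [hd, hm, _root_.map_smul]
  · have hvV : v ∈ V := hv.apply_eq_smul
    rw [h] at hvV
    exact hv.2 hvV

/-- There is a linear endomorphism of nonzero trace commuting with all module endomorphisms. -/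
theorem exists_trace_ne_zero [IsAlgClosed F] [Nontrivial M] (h2 : (2 : F) ≠ 0)
    (hM : IsGradedSimple δ J) :
    ∃ f : M →ₗ[F] M, LinearMap.trace F M f ≠ 0 ∧ ∀ (d : Module.End A M) m, d (f m) = f (d m) := by
  obtain ⟨y, hy⟩ : ∃ y : M →ₗ[F] M, LinearMap.trace F M y = 1 := by
    obtain ⟨m, hm⟩ := exists_ne (0 : M)
    obtain ⟨φ, hφ⟩ : ∃ φ : Module.Dual F M, φ m ≠ 0 := by
      by_contra! h
      exact hm ((Module.forall_dual_apply_eq_zero_iff F m).1 h)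
    exact ⟨dualTensorHom F M M (((φ m)⁻¹ • φ) ⊗ₜ m), by
      rw [LinearMap.trace_eq_contract_apply, contractLeft_apply, LinearMap.smul_apply, smul_eq_mul,
        inv_mul_cancel₀ hφ]⟩
  have hodd : ∀ d : Module.End A M, ∃ r : F, ∀ m,
      (2 : F) • d m = r • m + (d - hM.conj hM d) m := by
    intro d
    obtain ⟨r, hr⟩ := hM.exists_eq_smul _ (hM.add_conj_apply hM d)
    refine ⟨r, fun m => ?_⟩
    rw [← hr, LinearMap.add_apply, LinearMap.sub_apply, two_smul]
    abel
  have hcomm : ∀ f : M →ₗ[F] M, (∀ (d : Module.End A M), (∀ m, d (J m) = -J (d m)) →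
      ∀ m, d (f m) = f (d m)) → ∀ (d : Module.End A M) m, d (f m) = f (d m) := by
    intro f hf d m
    obtain ⟨r, hr⟩ := hodd d
    have h := hf _ (hM.sub_conj_apply hM d) m
    refine smul_right_injective M h2 ?_
    change (2 : F) • d (f m) = (2 : F) • f (d m)
    rw [← LinearMap.map_smul f, hr, hr, h, map_add, _root_.map_smul]
  by_cases hu : ∃ u : Module.End A M, u ≠ 0 ∧ ∀ m, u (J m) = -J (u m)
  · obtain ⟨u, hu0, hu⟩ := hu
    have hbij := hM.bijective_of_homogeneous hM hu0 (ε := -1) fun m => by rw [hu]; simp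
    obtain ⟨r, hr⟩ := hM.exists_eq_smul (u * u) fun m => by simp [hu]
    simp only [Module.End.mul_apply] at hr
    have hr0 : r ≠ 0 := by
      rintro rfl
      obtain ⟨m, hm⟩ := exists_ne (0 : M)
      refine hm (hbij.1 (hbij.1 ?_))
      rw [hr, zero_smul, map_zero, map_zero]
    let v : M →ₗ[F] M := u.restrictScalars F
    have hvv : v * v = r • 1 := LinearMap.ext hr
    refine ⟨y + r⁻¹ • (v * y * v), ?_, hcomm _ fun d hd m => ?_⟩
    · rw [map_add, _root_.map_smul, LinearMap.trace_mul_comm, ← mul_assoc, hvv, smul_mul_assoc,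
        one_mul, _root_.map_smul, smul_smul, inv_mul_cancel₀ hr0, one_smul, hy, one_add_one_eq_two]
      exact h2
    · obtain ⟨s, hs⟩ := hM.exists_eq_smul (u * d) fun m => by simp [hu, hd]
      simp only [Module.End.mul_apply] at hs
      have hd' : ∀ m, d m = (r⁻¹ * s) • u m := fun m => by
        refine hbij.1 ?_
        rw [hs, ← LinearMap.coe_restrictScalars F u, _root_.map_smul,
          LinearMap.coe_restrictScalars, hr, smul_smul]
        congr 1
        field_simp
      have hv : ∀ m, v m = u m := fun m => rfl
      simp only [hd', LinearMap.add_apply, LinearMap.smul_apply, Module.End.mul_apply, map_add,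
        _root_.map_smul, hv, hr]
      rw [← hv, ← hv, _root_.map_smul]
      simp only [hv, hr, smul_add, smul_smul, inv_mul_cancel₀ hr0, one_smul]
      rw [add_comm]
  · refine ⟨y, by rw [hy]; exact one_ne_zero, hcomm _ fun d hd m => ?_⟩
    have : d = 0 := by
      by_contra h
      exact hu ⟨d, h, hd⟩
    simp [this]

variable [IsScalarTower F A N] [FiniteDimensional F N]

theorem _root_.exists_hom_ne_zero_symm [IsSemisimpleModule A M] [IsSemisimpleModule A N]
    {φ : N →ₗ[A] M} (hφ : φ ≠ 0) : ∃ ψ : M →ₗ[A] N, ψ ≠ 0 := by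
  obtain ⟨p, hp⟩ := IsSemisimpleModule.extension_property (LinearMap.range φ).subtype
    (Submodule.subtype_injective _) LinearMap.id
  obtain ⟨ψ, hψ⟩ := IsSemisimpleModule.lifting_property φ.rangeRestrict
    φ.surjective_rangeRestrict p
  refine ⟨ψ, ?_⟩
  rintro rfl
  refine hφ (LinearMap.ext fun m => ?_)
  have h := LinearMap.congr_fun hp (φ.rangeRestrict m)
  rw [← hψ] at h
  simpa using (congrArg Subtype.val h).symm

theorem _root_.IsSemisimpleModule.prod [IsSemisimpleModule A M] [IsSemisimpleModule A N] :
    IsSemisimpleModule A (M × N) := by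
  have h := IsSemisimpleModule.sup (IsSemisimpleModule.range (LinearMap.inl A M N))
    (IsSemisimpleModule.range (LinearMap.inr A M N))
  rw [LinearMap.sup_range_inl_inr] at h
  exact .congr Submodule.topEquiv.symm

/-- Graded simple modules with the same character admit a nonzero homomorphism. -/
theorem exists_hom_ne_zero [IsAlgClosed F] [Nontrivial M] (h2 : (2 : F) ≠ 0)
    (hM : IsGradedSimple δ J) (hN : IsGradedSimple δ K)
    (htr : ∀ a : A, LinearMap.trace F M (Algebra.lsmul F F M a) =
      LinearMap.trace F N (Algebra.lsmul F F N a)) : ∃ φ : M →ₗ[A] N, φ ≠ 0 := by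
  by_contra! hMN
  have := hM.isSemisimpleModule
  have := hN.isSemisimpleModule
  have := IsSemisimpleModule.prod (A := A) (M := M) (N := N)
  have hNM : ∀ φ : N →ₗ[A] M, φ = 0 := by
    intro φ
    by_contra hφ
    obtain ⟨ψ, hψ⟩ := exists_hom_ne_zero_symm hφ
    exact hψ (hMN ψ)
  obtain ⟨f, hf, hfd⟩ := hM.exists_trace_ne_zero h2
  let E : Module.End (Module.End A (M × N)) (M × N) :=
    { toFun := fun e => (f e.1, 0)
      map_add' := by simp
      map_smul' := fun φ e => by
        have h1 : ∀ m, (φ (m, 0)).2 = 0 := fun m =>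
          LinearMap.congr_fun (hMN (LinearMap.snd A M N ∘ₗ φ ∘ₗ LinearMap.inl A M N)) m
        have h2 : ∀ m, (φ (0, m)).1 = 0 := fun m =>
          LinearMap.congr_fun (hNM (LinearMap.fst A M N ∘ₗ φ ∘ₗ LinearMap.inr A M N)) m
        have h3 := hfd (LinearMap.fst A M N ∘ₗ φ ∘ₗ LinearMap.inl A M N) e.1
        simp only [LinearMap.comp_apply, LinearMap.inl_apply, LinearMap.fst_apply] at h3
        have h4 : φ e = φ (e.1, 0) + φ (0, e.2) := by rw [← map_add]; simp
        simp only [Module.End.smul_def, RingHom.id_apply]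
        refine Prod.ext ?_ (h1 _).symm
        rw [h3, h4, Prod.fst_add, h2, add_zero] }
  have hE : ∀ e, E e = (f e.1, 0) := fun e => rfl
  obtain ⟨s, hs⟩ := Module.Finite.fg_top (R := F) (M := M × N)
  obtain ⟨a, ha⟩ := jacobson_density E s
  have ha' : ∀ e : M × N, (f e.1, (0 : N)) = a • e := by
    intro e
    induction hs.ge (trivial : e ∈ ⊤) using Submodule.span_induction with
    | mem e he => exact ha e he
    | zero => simp
    | add x y _ _ hx hy => rw [smul_add, ← hx, ← hy]; simp
    | smul r x _ hx => rw [smul_comm a r x, ← hx]; simp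
  refine hf ?_
  have h1 : f = Algebra.lsmul F F M a := LinearMap.ext fun m => congrArg Prod.fst (ha' (m, 0))
  have h2 : Algebra.lsmul F F N a = 0 :=
    LinearMap.ext fun m => (congrArg Prod.snd (ha' (0, m))).symm
  rw [h1, htr, h2, map_zero]

end IsGradedSimple

end GradedSimple

section GradedIrreducible

variable {F A M N : Type*} [Field F] [Ring A] [Algebra F A]
  [AddCommGroup M] [Module F M] [AddCommGroup N] [Module F N]

/-- A representation with a compatible involution `J` and without proper nonzero invariant
`J`-stable subspaces. -/
structure IsGradedIrreducible (δ : A →ₐ[F] A) (ρ : A →ₐ[F] Module.End F M)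
    (J : Module.End F M) : Prop where
  sq : J * J = 1
  mul_map : ∀ a, J * ρ a = ρ (δ a) * J
  eq_bot_or_top : ∀ V : Submodule F M, (∀ (a : A) (m : M), m ∈ V → ρ a m ∈ V) →
    (∀ m ∈ V, J m ∈ V) → V = ⊥ ∨ V = ⊤

namespace IsGradedIrreducible

variable {δ : A →ₐ[F] A} {ρ : A →ₐ[F] Module.End F M} {σ : A →ₐ[F] Module.End F N}
  {J : Module.End F M} {K : Module.End F N}

theorem isGradedSimple [Module A M] [IsScalarTower F A M] (h : IsGradedIrreducible δ ρ J)
    (hρ : ∀ (a : A) (m : M), a • m = ρ a m) : IsGradedSimple δ J where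
  sq m := LinearMap.congr_fun h.sq m
  map_smul a m := by
    rw [hρ, hρ]
    exact LinearMap.congr_fun (h.mul_map a) m
  eq_bot_or_top V hV := by
    rcases h.eq_bot_or_top (V.restrictScalars F) (fun a m hm => hρ a m ▸ V.smul_mem a hm) hV
      with h | h
    · exact Or.inl ((Submodule.restrictScalars_eq_bot_iff F A M).1 h)
    · exact Or.inr ((Submodule.restrictScalars_eq_top_iff F A M).1 h)

/-- Graded irreducible representations with the same character are isomorphic up to parity. -/
theorem exists_linearEquiv_of_trace_eq [IsAlgClosed F] [FiniteDimensional F M]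
    [FiniteDimensional F N] [Nontrivial M] (h2 : (2 : F) ≠ 0) (hM : IsGradedIrreducible δ ρ J)
    (hN : IsGradedIrreducible δ σ K)
    (htr : ∀ a, LinearMap.trace F M (ρ a) = LinearMap.trace F N (σ a)) :
    ∃ ψ : M ≃ₗ[F] N, (∀ a m, ψ (ρ a m) = σ a (ψ m)) ∧
      ((∀ m, ψ (J m) = K (ψ m)) ∨ ∀ m, ψ (J m) = -K (ψ m)) := by
  let _ : Module A M := Module.compHom M ρ.toRingHom
  let _ : Module A N := Module.compHom N σ.toRingHom
  have hρ : ∀ (a : A) (m : M), a • m = ρ a m := fun a m => rfl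
  have hσ : ∀ (a : A) (m : N), a • m = σ a m := fun a m => rfl
  have : IsScalarTower F A M := ⟨fun r a m => by simp [hρ]⟩
  have : IsScalarTower F A N := ⟨fun r a m => by simp [hσ]⟩
  have hM' := hM.isGradedSimple hρ
  have hN' := hN.isGradedSimple hσ
  obtain ⟨φ, hφ⟩ := hM'.exists_hom_ne_zero h2 hN' htr
  obtain ⟨ψ, hψ⟩ := hM'.exists_homogeneous_equiv h2 hN' hφ
  exact ⟨ψ.restrictScalars F, fun a m => ψ.map_smul a m, hψ⟩

/-- The representation on the dual space obtained by twisting with an antiendomorphism. -/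
def dualRep (ρ : A →ₐ[F] Module.End F M) (τ : A →ₗ[F] A) (hmul : ∀ a b, τ (a * b) = τ b * τ a)
    (hone : τ 1 = 1) : A →ₐ[F] Module.End F (Module.Dual F M) :=
  AlgHom.ofLinearMap (Module.Dual.transpose ∘ₗ ρ.toLinearMap ∘ₗ τ)
    (by ext; simp [hone, Module.Dual.transpose_apply])
    (fun a b => by ext; simp [hmul, Module.Dual.transpose_apply])

/-- The dual of a graded irreducible representation is graded irreducible. -/
theorem dual [FiniteDimensional F M] (h : IsGradedIrreducible δ ρ J) (τ : A →ₗ[F] A)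
    (hsurj : Function.Surjective τ)
    (hmul : ∀ a b, τ (a * b) = τ b * τ a) (hone : τ 1 = 1) (hδ : ∀ a, δ (τ a) = τ (δ a)) :
    IsGradedIrreducible δ (dualRep ρ τ hmul hone) (Module.Dual.transpose J) where
  sq := by
    ext φ m
    exact congrArg φ (LinearMap.congr_fun h.sq m)
  mul_map a := by
    ext φ m
    have h1 := LinearMap.congr_fun (h.mul_map (δ (τ a))) m
    have h2 := LinearMap.congr_fun (h.mul_map (τ a)) (J m)
    have hJ : ∀ m, J (J m) = m := LinearMap.congr_fun h.sq
    simp only [Module.End.mul_apply, hJ] at h1 h2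
    change φ (ρ (τ a) (J m)) = φ (J (ρ (τ (δ a)) m))
    rw [← hδ, ← h2, hJ]
  eq_bot_or_top W hW hWJ := by
    have hmem : ∀ m, m ∈ W.dualCoannihilator ↔ ∀ φ ∈ W, φ m = 0 := fun m =>
      Submodule.mem_dualCoannihilator m
    have hW' : W.dualCoannihilator.dualAnnihilator = W :=
      Subspace.dualCoannihilator_dualAnnihilator_eq
    have hstable : ∀ (a : A) (m : M), m ∈ W.dualCoannihilator → ρ a m ∈ W.dualCoannihilator := by
      intro a m hm
      rw [hmem] at hm ⊢
      obtain ⟨a, rfl⟩ := hsurj a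
      exact fun φ hφ => hm _ (hW a φ hφ)
    have hJstable : ∀ m ∈ W.dualCoannihilator, J m ∈ W.dualCoannihilator := by
      intro m hm
      rw [hmem] at hm ⊢
      exact fun φ hφ => hm _ (hWJ φ hφ)
    rcases h.eq_bot_or_top W.dualCoannihilator hstable hJstable with hV | hV
    · exact Or.inr (by rw [← hW', hV, Submodule.dualAnnihilator_bot])
    · exact Or.inl (by rw [← hW', hV, Submodule.dualAnnihilator_top])

end IsGradedIrreducible

end GradedIrreducible

namespace HC

/-- **Irreducible integral modules are self-dual** (Corollary `selfdual` of
Brundan–Kleshchev): every irreducible integral `H_n`-supermodule `L` satisfies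
`L ≅ L^τ`, where `L^τ` is the dual space with the action `(a·φ)(m) = φ(τ(a)m)`.
An isomorphism of supermodules is a bijective map whose even and odd parts `f₀, f₁`
are, respectively, equivariant and equivariant up to the sign twist by the grading
automorphism `δ`. -/
theorem irreducible_integral_self_dual
    (F : Type) [Field F] [IsAlgClosed F] (h2 : (2 : F) ≠ 0)
    (q : F) (hq : GoodParam F q) (n : ℕ)
    (δ : H F q n →ₐ[F] H F q n) (hδ : IsGradingAut F q δ)
    (τ : H F q n →ₗ[F] H F q n) (hτ : IsTauAntiAut F q τ)
    (M : Type) [AddCommGroup M] [Module F M] [FiniteDimensional F M]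
    (ρ : H F q n →ₐ[F] Module.End F M)
    (JM : Module.End F M) (hJ2 : JM * JM = 1)
    (hJρ : ∀ h : H F q n, JM * ρ h = ρ (δ h) * JM)
    (hM0 : ∃ m : M, m ≠ 0)
    (hirr : ∀ V : Submodule F M, (∀ (h : H F q n) (m : M), m ∈ V → ρ h m ∈ V) →
      (∀ m ∈ V, JM m ∈ V) → V = ⊥ ∨ V = ⊤)
    (hint : ∀ (k : Fin n) (lam : F),
      LinearMap.ker (ρ (X F q k + Xinv F q k) - lam • (1 : Module.End F M)) ≠ ⊥ →
        ∃ i : ℕ, memI F q i ∧ lam = qres F q i) :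
    ∃ (Φ : M ≃ₗ[F] Module.Dual F M) (f₀ f₁ : M →ₗ[F] Module.Dual F M),
      (∀ m : M, Φ m = f₀ m + f₁ m) ∧
      (∀ (h : H F q n) (m : M), f₀ (ρ h m) = (f₀ m).comp (ρ (τ h))) ∧
      (∀ (h : H F q n) (m : M), f₁ (ρ h m) = (f₁ m).comp (ρ (τ (δ h)))) ∧
      (∀ m : M, f₀ (JM m) = (f₀ m).comp JM) ∧
      (∀ m : M, f₁ (JM m) = -((f₁ m).comp JM)) := by
  have hM : IsGradedIrreducible δ ρ JM := ⟨hJ2, hJρ, hirr⟩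
  obtain ⟨m₀, hm₀⟩ := hM0
  have : Nontrivial M := ⟨⟨m₀, 0, hm₀⟩⟩
  have hN := hM.dual τ hτ.1.2 hτ.2.1 hτ.2.2.1 (hδ.comm_tau hτ)
  obtain ⟨ψ, hψ, hpar⟩ := hM.exists_linearEquiv_of_trace_eq h2 hN fun h => by
    rw [← trace_tau h2 hδ hτ ρ JM hJ2 hJρ]
    exact (LinearMap.trace_transpose' (ρ (τ h))).symm
  rcases hpar with heven | hodd
  · exact ⟨ψ, ψ, 0, by simp, hψ, by simp, heven, by simp⟩
  · have hJ : ∀ m, JM (JM m) = m := LinearMap.congr_fun hJ2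
    refine ⟨(LinearEquiv.ofInvolutive JM hJ).trans ψ, 0, ψ ∘ₗ JM, fun m => (zero_add _).symm, by simp,
      fun h m => ?_, by simp, fun m => hodd (JM m)⟩
    change ψ (JM (ρ h m)) = _
    rw [show JM (ρ h m) = ρ (δ h) (JM m) from LinearMap.congr_fun (hJρ h) m]
    exact hψ (δ h) (JM m)

end HC
end
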